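/- arXiv:2404.02069 — 2 statements merged into one kernel-verified Lean document; each statement's English description precedes it below -/
import Mathlib

section
/- Let K be a field of characteristic zero, A_n(K) the Weyl algebra with a fixed partition of {1,…,n} into blocks of sizes n_1,…,n_p, M a finitely generated left A_n(K)-module with generators f_1,…,f_m, and φ_M(t_1,…,t_p) the multivariate dimension polynomial of M, i.e., φ_M(r_1,…,r_p) = dim_K Σ_{i=1}^m W_{r_1,…,r_p} f_i for all sufficiently large (r_1,…,r_p). Then M is holonomic if and only if the total degree of φ_M equals n. -/
set_option synthInstance.maxHeartbeats 400000
set_option maxHeartbeats 1000000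

open MvPolynomial

noncomputable def weylGens (n : ℕ) (K : Type) [Field K] :
    Set (Module.End K (MvPolynomial (Fin n) K)) :=
  (Set.range fun i : Fin n =>
      (LinearMap.mulLeft K (X i : MvPolynomial (Fin n) K) : Module.End K (MvPolynomial (Fin n) K))) ∪
  (Set.range fun i : Fin n => ((pderiv i).toLinearMap : Module.End K (MvPolynomial (Fin n) K)))

noncomputable def WeylAlg (n : ℕ) (K : Type) [Field K] :
    Subalgebra K (Module.End K (MvPolynomial (Fin n) K)) :=
  Algebra.adjoin K (weylGens n K)

noncomputable def wx (n : ℕ) (K : Type) [Field K] (i : Fin n) : WeylAlg n K :=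
  ⟨LinearMap.mulLeft K (X i), Algebra.subset_adjoin (Set.mem_union_left _ ⟨i, rfl⟩)⟩

noncomputable def wd (n : ℕ) (K : Type) [Field K] (i : Fin n) : WeylAlg n K :=
  ⟨(pderiv i).toLinearMap, Algebra.subset_adjoin (Set.mem_union_right _ ⟨i, rfl⟩)⟩

noncomputable def wMono (n : ℕ) (K : Type) [Field K] (α β : Fin n → ℕ) : WeylAlg n K :=
  (((List.finRange n).map fun i => wx n K i ^ α i).prod) *
  (((List.finRange n).map fun i => wd n K i ^ β i).prod)

def ordTot (n : ℕ) (α β : Fin n → ℕ) : ℕ := (∑ i, α i) + ∑ i, β i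

noncomputable def bernW (n : ℕ) (K : Type) [Field K] (r : ℤ) : Submodule K (WeylAlg n K) :=
  Submodule.span K {D | ∃ α β : Fin n → ℕ, (ordTot n α β : ℤ) ≤ r ∧ D = wMono n K α β}

noncomputable def modFil (n : ℕ) (K : Type) [Field K] (M : Type) [AddCommGroup M]
    [Module K M] [Module (WeylAlg n K) M] (m : ℕ) (g : Fin m → M) (r : ℤ) :
    Submodule K M :=
  Submodule.span K {x | ∃ i, ∃ D ∈ bernW n K r, x = D • g i}


/-- A polynomial in `p` variables with rational coefficients is numerical if it takes
integer values for all sufficiently large integer arguments. -/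
def IsNumerical {p : ℕ} (f : MvPolynomial (Fin p) ℚ) : Prop :=
  ∃ s : Fin p → ℤ, ∀ r : Fin p → ℤ, (∀ i, s i ≤ r i) →
    ∃ z : ℤ, MvPolynomial.eval (fun i => (r i : ℚ)) f = (z : ℚ)

/-- The `j`-th order of the monomial `x^α ∂^β` with respect to the partition `B`. -/
def ordBlk {n p : ℕ} (B : Fin n → Fin p) (α β : Fin n → ℕ) (j : Fin p) : ℕ :=
  ∑ i ∈ Finset.univ.filter (fun i => B i = j), (α i + β i)

/-- The component `W_{r_1,…,r_p}` of the `p`-dimensional filtration of the Weyl algebra. -/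
noncomputable def bernWB (n p : ℕ) (K : Type) [Field K] (B : Fin n → Fin p)
    (r : Fin p → ℤ) : Submodule K (WeylAlg n K) :=
  Submodule.span K
    {D | ∃ α β : Fin n → ℕ, (∀ j, (ordBlk B α β j : ℤ) ≤ r j) ∧ D = wMono n K α β}

/-- The component `M_{r_1,…,r_p} = Σ_i W_{r_1,…,r_p} g_i` of the induced filtration of `M`. -/
noncomputable def modFilB (n p : ℕ) (K : Type) [Field K] (B : Fin n → Fin p)
    (M : Type) [AddCommGroup M] [Module K M] [Module (WeylAlg n K) M]
    (m : ℕ) (g : Fin m → M) (r : Fin p → ℤ) : Submodule K M :=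
  Submodule.span K {x | ∃ i, ∃ D ∈ bernWB n p K B r, x = D • g i}

def IsHolonomic (n : ℕ) (K : Type) [Field K] (M : Type) [AddCommGroup M] [Module K M]
    [Module (WeylAlg n K) M] : Prop :=
  Module.Finite (WeylAlg n K) M ∧
  ∀ (m : ℕ) (g : Fin m → M), Submodule.span (WeylAlg n K) (Set.range g) = ⊤ →
    ∀ ψ : Polynomial ℚ,
      (∃ s : ℤ, ∀ r : ℤ, s ≤ r →
        ψ.eval (r : ℚ) = (Module.finrank K (modFil n K M m g r) : ℚ)) →
      ψ.natDegree ≤ n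

/-! Eventually polynomial functions and counting complements of upper sets. -/

def EvPoly (f : ℕ → ℚ) : Prop :=
  ∃ P : Polynomial ℚ, ∃ s : ℕ, ∀ r : ℕ, s ≤ r → f r = P.eval (r : ℚ)

lemma EvPoly.add {f g : ℕ → ℚ} (hf : EvPoly f) (hg : EvPoly g) : EvPoly (fun r => f r + g r) := by
  obtain ⟨P, s, h⟩ := hf
  obtain ⟨Q, t, h'⟩ := hg
  refine ⟨P + Q, max s t, fun r hr => ?_⟩
  beta_reduce
  rw [h r (le_trans (le_max_left _ _) hr), h' r (le_trans (le_max_right _ _) hr)]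
  simp

lemma EvPoly.const (c : ℚ) : EvPoly (fun _ => c) := ⟨Polynomial.C c, 0, fun r _ => by simp⟩

lemma EvPoly.sum {ι : Type*} (s : Finset ι) {f : ι → ℕ → ℚ} (hf : ∀ i, EvPoly (f i)) :
    EvPoly (fun r => ∑ i ∈ s, f i r) := by
  classical
  induction s using Finset.induction_on with
  | empty => simpa using EvPoly.const 0
  | insert a s ha ih =>
    simp only [Finset.sum_insert ha]
    exact (hf a).add ih

lemma EvPoly.shift {f : ℕ → ℚ} (hf : EvPoly f) : EvPoly (fun r => f (r + 1)) := by
  obtain ⟨P, s, h⟩ := hf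
  refine ⟨P.comp (Polynomial.X + 1), s, fun r hr => ?_⟩
  beta_reduce
  rw [h _ (by omega)]
  simp

lemma EvPoly.unshift {f : ℕ → ℚ} (hf : EvPoly (fun r => f (r + 1))) : EvPoly f := by
  obtain ⟨P, s, h⟩ := hf
  refine ⟨P.comp (Polynomial.X - 1), s + 1, fun r hr => ?_⟩
  obtain ⟨t, rfl⟩ : ∃ t, r = t + 1 := ⟨r - 1, by omega⟩
  have h2 : f (t + 1) = _ := h t (by omega)
  rw [h2]
  simp

lemma exists_antidiff (P : Polynomial ℚ) :
    ∃ Q : Polynomial ℚ, ∀ x : ℚ, Q.eval (x + 1) - Q.eval x = P.eval x := by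
  induction P using Polynomial.induction_on' with
  | add p q hp hq =>
    obtain ⟨P, hP⟩ := hp
    obtain ⟨Q, hQ⟩ := hq
    refine ⟨P + Q, fun x => ?_⟩
    rw [Polynomial.eval_add, Polynomial.eval_add, Polynomial.eval_add, ← hP, ← hQ]; ring
  | monomial k a =>
    refine ⟨Polynomial.C (a / (k + 1)) * Polynomial.bernoulli (k + 1), fun x => ?_⟩
    have h := Polynomial.bernoulli_eval_one_add (k + 1) x
    rw [Polynomial.eval_mul, Polynomial.eval_mul, add_comm x 1, h]
    have : (k : ℚ) + 1 ≠ 0 := by positivity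
    simp
    field_simp
    ring

lemma EvPoly.of_diff {f g : ℕ → ℚ} (hg : EvPoly g) (h : ∀ r, f (r + 1) = g r + f r) :
    EvPoly f := by
  obtain ⟨P, s, hP⟩ := hg
  obtain ⟨Q, hQ⟩ := exists_antidiff P
  refine ⟨Q + Polynomial.C (f s - Q.eval (s : ℚ)), s, fun r hr => ?_⟩
  induction r, hr using Nat.le_induction with
  | base => simp
  | succ r hr ih =>
    rw [h, hP r hr, ih, ← hQ]
    simp
    ring

lemma finite_sum_le {k : ℕ} (r : ℕ) : {a : Fin k → ℕ | ∑ i, a i ≤ r}.Finite := by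
  refine (Set.finite_Iic (fun _ => r : Fin k → ℕ)).subset fun a ha i => ?_
  exact le_trans (Finset.single_le_sum (f := a) (fun _ _ => Nat.zero_le _) (Finset.mem_univ i)) ha

/-- The number of elements outside `E` of total degree at most `r`. -/
noncomputable def cnt {k : ℕ} (E : Set (Fin k → ℕ)) (r : ℕ) : ℕ :=
  Set.ncard {a : Fin k → ℕ | a ∉ E ∧ ∑ i, a i ≤ r}

lemma cnt_succ {k : ℕ} (E : Set (Fin (k + 1) → ℕ)) (r : ℕ) :
    cnt E (r + 1) = cnt {b : Fin k → ℕ | (Fin.cons 0 b : Fin (k + 1) → ℕ) ∈ E} (r + 1) +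
      cnt {a : Fin (k + 1) → ℕ | a + Pi.single 0 1 ∈ E} r := by
  unfold cnt
  have inj1 : Function.Injective (fun b : Fin k → ℕ => (Fin.cons 0 b : Fin (k + 1) → ℕ)) :=
    Fin.cons_right_injective (α := fun _ => ℕ) 0
  have inj2 : Function.Injective (fun a : Fin (k + 1) → ℕ => a + Pi.single 0 1) :=
    add_left_injective _
  have e1 := Set.ncard_image_of_injective
    {a : Fin k → ℕ | a ∉ {b : Fin k → ℕ | (Fin.cons 0 b : Fin (k + 1) → ℕ) ∈ E} ∧
      ∑ i, a i ≤ r + 1} inj1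
  have e2 := Set.ncard_image_of_injective
    {a : Fin (k + 1) → ℕ | a ∉ {a : Fin (k + 1) → ℕ | a + Pi.single 0 1 ∈ E} ∧
      ∑ i, a i ≤ r} inj2
  rw [← e1, ← e2, ← Set.ncard_union_eq ?_
    (((finite_sum_le (r + 1)).subset fun a h => h.2).image _)
    (((finite_sum_le r).subset fun a h => h.2).image _)]
  · congr 1
    ext a
    simp only [Set.mem_ofPred_eq, Set.mem_union, Set.mem_image]
    constructor
    · rintro ⟨h1, h2⟩
      rw [Fin.sum_univ_succ] at h2
      by_cases h0 : a 0 = 0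
      · left
        have : (Fin.cons 0 (Fin.tail a) : Fin (k + 1) → ℕ) = a := by
          rw [← h0]; exact Fin.cons_self_tail a
        refine ⟨Fin.tail a, ⟨by rwa [this], ?_⟩, this⟩
        simp only [Fin.tail]; omega
      · right
        have : a - Pi.single 0 1 + Pi.single 0 1 = a := by
          ext i
          refine Fin.cases ?_ (fun j => ?_) i
          · simp; omega
          · simp
        refine ⟨a - Pi.single 0 1, ⟨by rwa [this], ?_⟩, this⟩
        rw [Fin.sum_univ_succ]
        simp
        omega
    · rintro (⟨b, ⟨h1, h2⟩, rfl⟩ | ⟨b, ⟨h1, h2⟩, rfl⟩)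
      · refine ⟨h1, ?_⟩
        rw [Fin.sum_univ_succ]; simpa using h2
      · refine ⟨h1, ?_⟩
        simp [Finset.sum_add_distrib]; omega
  · rw [Set.disjoint_left]
    rintro _ ⟨b, _, rfl⟩ ⟨c, _, h⟩
    have := congrFun h 0
    simp at this

lemma wf_upper (α : Type*) [Preorder α] [WellQuasiOrderedLE α] :
    WellFounded (fun E F : {E : Set α // IsUpperSet E} => F.1 ⊂ E.1) := by
  rw [wellFounded_iff_isEmpty_descending_chain]
  refine ⟨fun ⟨f, hf⟩ => ?_⟩
  choose a ha hb using fun j => Set.exists_of_ssubset (hf j)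
  obtain ⟨i, j, hij, hle⟩ := wellQuasiOrdered_le a
  have mono : Monotone (fun j => (f j).1) := monotone_nat_of_le_succ fun j => (hf j).1
  exact hb j ((f j).2 hle (mono (Nat.succ_le_of_lt hij) (ha i)))

lemma evPoly_cnt {k : ℕ} (E : Set (Fin k → ℕ)) (hE : IsUpperSet E) :
    EvPoly (fun r => (cnt E r : ℚ)) := by
  induction k with
  | zero =>
    have : ∀ r, cnt E r = cnt E 0 := fun r => by simp [cnt]
    simp only [this]
    exact EvPoly.const _
  | succ k ih =>
    suffices H : ∀ F : {E : Set (Fin (k + 1) → ℕ) // IsUpperSet E},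
        EvPoly (fun r => (cnt F.1 r : ℚ)) from H ⟨E, hE⟩
    intro F
    induction F using (wf_upper (Fin (k + 1) → ℕ)).induction with
    | _ F ihF =>
      have hs : EvPoly (fun r => (cnt {b : Fin k → ℕ |
          (Fin.cons 0 b : Fin (k + 1) → ℕ) ∈ F.1} (r + 1) : ℚ)) := by
        refine EvPoly.shift (f := fun r => (cnt {b : Fin k → ℕ |
          (Fin.cons 0 b : Fin (k + 1) → ℕ) ∈ F.1} r : ℚ)) (ih _ ?_)
        intro b c hbc hb
        exact F.2 (Fin.cons_le_cons.2 ⟨le_rfl, hbc⟩) hb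
      have hup : IsUpperSet {a : Fin (k + 1) → ℕ | a + Pi.single 0 1 ∈ F.1} := by
        intro b c hbc hb
        exact F.2 (add_le_add_left hbc _) hb
      have hsub : F.1 ⊆ {a : Fin (k + 1) → ℕ | a + Pi.single 0 1 ∈ F.1} := by
        intro a ha
        exact F.2 (le_add_of_nonneg_right zero_le) ha
      rcases hsub.eq_or_ssubset with h | h
      · refine EvPoly.of_diff hs fun r => ?_
        rw [cnt_succ, ← h]
        push_cast
        rfl
      · have := ihF ⟨_, hup⟩ h
        refine EvPoly.unshift ?_
        simp only [cnt_succ, Nat.cast_add]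
        exact hs.add this

/-! Abstract Hilbert polynomial theorem. -/

section Standard
variable {K V I L : Type*} [Field K] [AddCommGroup V] [Module K V] [LinearOrder L]

/-- The standard indices: those whose vector is not in the span of smaller ones. -/
def stdSet (K : Type*) [Field K] [Module K V] (key : I → L) (v : I → V) : Set I :=
  {i | v i ∉ Submodule.span K (v '' {j | key j < key i})}

lemma stdSet_linearIndependent (key : I → L) (hkey : Function.Injective key) (v : I → V) :
    LinearIndependent K (fun i : stdSet K key v => v i) := by
  classical
  rw [linearIndependent_iff']
  intro s c hc
  by_contra hcon
  push Not at hcon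
  obtain ⟨i0, hi0, hci0⟩ := hcon
  have hne : (s.filter fun i => c i ≠ 0).Nonempty := ⟨i0, by simp [hi0, hci0]⟩
  obtain ⟨i, hi, hmax⟩ := Finset.exists_max_image _ (fun i : stdSet K key v => key i) hne
  rw [Finset.mem_filter] at hi
  apply i.2
  have h1 : c i • v i = - ∑ j ∈ s.erase i, c j • v j := by
    rw [← Finset.add_sum_erase s _ hi.1] at hc
    exact eq_neg_of_add_eq_zero_left hc
  have h2 : v i = (c i)⁻¹ • (- ∑ j ∈ s.erase i, c j • v j) := by
    rw [← h1, smul_smul, inv_mul_cancel₀ hi.2, one_smul]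
  rw [h2]
  refine Submodule.smul_mem _ _ (Submodule.neg_mem _ (Submodule.sum_mem _ fun j hj => ?_))
  by_cases hcj : c j = 0
  · simp [hcj]
  · refine Submodule.smul_mem _ _ (Submodule.subset_span ⟨j, ?_, rfl⟩)
    rw [Finset.mem_erase] at hj
    refine lt_of_le_of_ne (hmax j (by simp [hj.2, hcj])) fun h => hj.1 ?_
    exact Subtype.ext (hkey h)

lemma span_stdSet [WellFoundedLT L] (key : I → L) (v : I → V) (T : Set I)
    (hT : ∀ i ∈ T, ∀ j, key j < key i → j ∈ T) :
    Submodule.span K (v '' T) = Submodule.span K (v '' (T ∩ stdSet K key v)) := by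
  apply le_antisymm
  · rw [Submodule.span_le]
    rintro _ ⟨i, hi, rfl⟩
    induction i using (InvImage.wf key (wellFounded_lt (α := L))).induction with
    | _ i ih =>
      by_cases h : i ∈ stdSet K key v
      · exact Submodule.subset_span ⟨i, ⟨hi, h⟩, rfl⟩
      · have h' : v i ∈ Submodule.span K (v '' {j | key j < key i}) := not_not.1 h
        refine (Submodule.span_le.2 ?_) h'
        rintro _ ⟨j, hj, rfl⟩
        exact ih j hj (hT i hi j hj)
  · exact Submodule.span_mono (Set.image_mono Set.inter_subset_left)

lemma finrank_span_stdSet [WellFoundedLT L] (key : I → L) (hkey : Function.Injective key)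
    (v : I → V) (T : Set I) (hT : ∀ i ∈ T, ∀ j, key j < key i → j ∈ T) (hfin : T.Finite) :
    Module.finrank K (Submodule.span K (v '' T)) = (T ∩ stdSet K key v).ncard := by
  rw [span_stdSet key v T hT]
  have hf : (T ∩ stdSet K key v).Finite := hfin.inter_of_left _
  have := hf.fintype
  have hli : LinearIndependent K (fun i : ↥(T ∩ stdSet K key v) => v i) :=
    (stdSet_linearIndependent key hkey v).comp
      (fun i : ↥(T ∩ stdSet K key v) => (⟨i.1, i.2.2⟩ : stdSet K key v))
      (fun i j h => Subtype.ext (congrArg (fun x : stdSet K key v => x.1) h))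
  have h3 := finrank_span_eq_card hli
  rw [Set.image_eq_range, h3, Set.ncard_eq_toFinset_card', Set.toFinset_card]

end Standard

/-- The ordering key on (exponent, generator index) pairs. -/
def hkey {k m : ℕ} (x : (Fin k → ℕ) × Fin m) : ℕ ×ₗ (Lex (Fin k → ℕ) ×ₗ Fin m) :=
  toLex (∑ i, x.1 i, toLex (toLex x.1, x.2))

lemma hkey_inj {k m : ℕ} : Function.Injective (hkey (k := k) (m := m)) := by
  intro x y h
  have h1 := congrArg (fun z => (ofLex (ofLex z).2)) h
  simp only [hkey, ofLex_toLex, Prod.mk.injEq] at h1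
  exact Prod.ext (toLex.injective h1.1) h1.2

lemma hkey_lt {k m : ℕ} (x y : (Fin k → ℕ) × Fin m) : hkey x < hkey y ↔
    ∑ i, x.1 i < ∑ i, y.1 i ∨ (∑ i, x.1 i = ∑ i, y.1 i ∧
      (toLex x.1 < toLex y.1 ∨ (x.1 = y.1 ∧ x.2 < y.2))) := by
  simp [hkey, Prod.Lex.toLex_lt_toLex]

lemma hilbert_exists {K V : Type*} [Field K] [AddCommGroup V] [Module K V] {k m : ℕ}
    (v : (Fin k → ℕ) × Fin m → V) (T : Fin k → (V →ₗ[K] V))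
    (hT : ∀ l a i, T l (v (a, i)) - v (a + Pi.single l 1, i) ∈
      Submodule.span K (v '' {y | ∑ t, y.1 t ≤ ∑ t, a t})) :
    EvPoly (fun r => (Module.finrank K
      (Submodule.span K (v '' {y | ∑ t, y.1 t ≤ r})) : ℚ)) := by
  classical
  set S := stdSet K hkey v with hS
  have hstep : ∀ (a : Fin k → ℕ) (i : Fin m) (l : Fin k), (a, i) ∉ S →
      (a + Pi.single l 1, i) ∉ S := by
    intro a i l ha
    have ha' : v (a, i) ∈ Submodule.span K (v '' {j | hkey j < hkey (a, i)}) := not_not.1 ha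
    have hsum : ∀ b : Fin k → ℕ, ∑ t, (b + Pi.single l 1 : Fin k → ℕ) t = ∑ t, b t + 1 := by
      intro b; simp [Finset.sum_add_distrib]
    show ¬ ¬ _
    rw [not_not]
    set U := Submodule.span K (v '' {j | hkey j < hkey (a + Pi.single l 1, i)}) with hU
    have hlow : ∀ b : Fin k → ℕ, ∑ t, b t ≤ ∑ t, a t →
        Submodule.span K (v '' {y : (Fin k → ℕ) × Fin m | ∑ t, y.1 t ≤ ∑ t, b t}) ≤ U := by
      intro b hb
      refine Submodule.span_mono (Set.image_mono fun y hy => ?_)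
      rw [Set.mem_ofPred_eq, hkey_lt]
      left
      rw [hsum]
      have : ∑ t, y.1 t ≤ ∑ t, b t := hy
      omega
    have h1 : T l (v (a, i)) ∈ U := by
      have : Submodule.span K (v '' {j | hkey j < hkey (a, i)}) ≤ U.comap (T l) := by
        rw [Submodule.span_le]
        rintro _ ⟨⟨b, j⟩, hb, rfl⟩
        rw [SetLike.mem_coe, Submodule.mem_comap]
        rw [Set.mem_ofPred_eq, hkey_lt] at hb
        have hle : ∑ t, b t ≤ ∑ t, a t := by
          rcases hb with hb | hb
          · exact hb.le
          · exact hb.1.le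
        have h2 := hlow b hle (hT l b j)
        have h3 : v (b + Pi.single l 1, j) ∈ U := by
          refine Submodule.subset_span ⟨_, ?_, rfl⟩
          rw [Set.mem_ofPred_eq, hkey_lt]
          dsimp only at hb ⊢
          rw [hsum, hsum]
          rcases hb with hb | ⟨hb, hb' | hb'⟩
          · left; omega
          · right; refine ⟨by omega, Or.inl ?_⟩
            exact add_lt_add_left hb' (toLex (Pi.single l 1 : Fin k → ℕ))
          · right; exact ⟨by omega, Or.inr ⟨by rw [hb'.1], hb'.2⟩⟩
        have := U.add_mem h2 h3
        rwa [sub_add_cancel] at this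
      exact this ha'
    have h2 := hlow a le_rfl (hT l a i)
    have := U.sub_mem h1 h2
    rwa [sub_sub_cancel] at this
  have hup : ∀ i : Fin m, IsUpperSet {a : Fin k → ℕ | (a, i) ∉ S} := by
    intro i
    have key : ∀ c a : Fin k → ℕ, (a, i) ∉ S → (a + c, i) ∉ S := by
      intro c
      induction hc : ∑ t, c t generalizing c with
      | zero =>
        intro a ha
        have : c = 0 := by
          ext t; simpa using (Finset.sum_eq_zero_iff.1 hc) t (Finset.mem_univ t)
        simpa [this] using ha
      | succ d ih =>
        intro a ha
        obtain ⟨l, hl⟩ : ∃ l, c l ≠ 0 := by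
          by_contra hcon
          push Not at hcon
          simp [hcon] at hc
        have hcl : c - Pi.single l 1 + Pi.single l 1 = c := by
          ext t
          by_cases h : t = l
          · subst h; simp; omega
          · simp [h]
        have hs : ∑ t, (c - Pi.single l 1 : Fin k → ℕ) t = d := by
          have : ∑ t, (c - Pi.single l 1 + Pi.single l 1 : Fin k → ℕ) t = d + 1 := by rw [hcl, hc]
          simp only [Pi.add_apply, Finset.sum_add_distrib, Finset.sum_pi_single'] at this
          simpa using this
        have := hstep _ i l (ih _ hs a ha)
        rwa [add_assoc, hcl] at this
    intro a b hab ha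
    obtain ⟨c, rfl⟩ := exists_add_of_le hab
    exact key c a ha
  have hfin : ∀ r, {y : (Fin k → ℕ) × Fin m | ∑ t, y.1 t ≤ r}.Finite := fun r =>
    ((finite_sum_le (k := k) r).prod (Set.finite_univ (α := Fin m))).subset
      fun y hy => ⟨hy, Set.mem_univ _⟩
  have hcount : ∀ r, Module.finrank K (Submodule.span K (v '' {y | ∑ t, y.1 t ≤ r})) =
      ∑ i, cnt {a : Fin k → ℕ | (a, i) ∉ S} r := by
    intro r
    rw [finrank_span_stdSet hkey hkey_inj v _ ?_ (hfin r)]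
    · have h1 : ({y : (Fin k → ℕ) × Fin m | ∑ t, y.1 t ≤ r} ∩ S) = 
          ⋃ i : Fin m, (fun a : Fin k → ℕ => (a, i)) '' {a | a ∉ {a | (a, i) ∉ S} ∧ ∑ t, a t ≤ r} := by
        ext ⟨a, i⟩
        simp [and_comm]
      rw [← hS, h1, Set.ncard_iUnion_of_finite]
      · rw [finsum_eq_sum_of_fintype]
        refine Finset.sum_congr rfl fun i _ => ?_
        rw [Set.ncard_image_of_injective _ (fun a b h => (Prod.ext_iff.1 h).1)]
        rfl
      · intro i
        exact ((finite_sum_le r).subset fun a h => h.2).image _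
      · intro i j hij
        rw [Function.onFun, Set.disjoint_left]
        rintro _ ⟨a, _, rfl⟩ ⟨b, _, h⟩
        exact hij (Prod.ext_iff.1 h).2.symm
    · intro x hx y hy
      rw [hkey_lt] at hy
      simp only [Set.mem_ofPred_eq] at hx ⊢
      rcases hy with hy | hy
      · omega
      · omega
  simp only [hcount, Nat.cast_sum]
  exact EvPoly.sum _ fun i => evPoly_cnt _ (hup i)

/-! Polynomial growth. -/

lemma tendsto_eval_nat (P : Polynomial ℚ) (hd : 0 < P.natDegree) (hl : 0 ≤ P.leadingCoeff) :
    Filter.Tendsto (fun r : ℕ => P.eval (r : ℚ)) Filter.atTop Filter.atTop :=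
  (P.tendsto_atTop_of_leadingCoeff_nonneg (Polynomial.natDegree_pos_iff_degree_pos.1 hd) hl).comp
    tendsto_natCast_atTop_atTop

lemma natDegree_le_of_eval_le (P Q : Polynomial ℚ) (s : ℕ)
    (h0 : ∀ r : ℕ, s ≤ r → 0 ≤ P.eval (r : ℚ))
    (h : ∀ r : ℕ, s ≤ r → P.eval (r : ℚ) ≤ Q.eval (r : ℚ)) : P.natDegree ≤ Q.natDegree := by
  by_contra hcon
  push Not at hcon
  have hd : 0 < P.natDegree := by omega
  have hl : 0 ≤ P.leadingCoeff := by
    by_contra hneg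
    push Not at hneg
    have ht := tendsto_eval_nat (-P) (by simpa using hd) (by simpa using hneg.le)
    obtain ⟨r, hr, hr2⟩ := ((ht.eventually_gt_atTop 0).and (Filter.eventually_ge_atTop s)).exists
    have := h0 r hr2
    rw [Polynomial.eval_neg] at hr
    linarith
  have hdeg : Q.degree < P.degree := Polynomial.degree_lt_degree hcon
  have ht := tendsto_eval_nat (P - Q) (by
    rw [Polynomial.natDegree_sub_eq_left_of_natDegree_lt hcon]; exact hd) (by
    rw [Polynomial.leadingCoeff_sub_of_degree_lt hdeg]; exact hl)
  obtain ⟨r, hr, hr2⟩ := ((ht.eventually_gt_atTop 0).and (Filter.eventually_ge_atTop s)).exists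
  have := h r hr2
  rw [Polynomial.eval_sub] at hr
  linarith

/-- Restriction of a polynomial to the ray through `a`. -/
noncomputable def ray {p : ℕ} (φ : MvPolynomial (Fin p) ℚ) (a : Fin p → ℕ) : Polynomial ℚ :=
  MvPolynomial.aeval (fun j => Polynomial.C (a j : ℚ) * Polynomial.X) φ

lemma ray_eval {p : ℕ} (φ : MvPolynomial (Fin p) ℚ) (a : Fin p → ℕ) (t : ℚ) :
    (ray φ a).eval t = MvPolynomial.eval (fun j => (a j : ℚ) * t) φ := by
  unfold ray
  induction φ using MvPolynomial.induction_on with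
  | C c => simp
  | add f g hf hg => rw [map_add, Polynomial.eval_add, hf, hg, map_add]
  | mul_X f j hf => rw [map_mul, Polynomial.eval_mul, hf, map_mul]; simp

lemma ray_expand {p : ℕ} (φ : MvPolynomial (Fin p) ℚ) (a : Fin p → ℕ) :
    ray φ a = ∑ d ∈ φ.support, Polynomial.monomial d.degree (φ.coeff d * ∏ j, (a j : ℚ) ^ d j) := by
  unfold ray
  conv_lhs => rw [φ.as_sum]
  rw [map_sum]
  refine Finset.sum_congr rfl fun d _ => ?_
  rw [MvPolynomial.aeval_monomial, Finsupp.prod_fintype _ _ (by simp)]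
  simp only [mul_pow, Finset.prod_mul_distrib, Finset.prod_pow_eq_pow_sum,
    ← Polynomial.C_mul_X_pow_eq_monomial, map_mul, map_prod, map_pow, Finsupp.degree_eq_sum]
  rw [mul_assoc]
  rfl

lemma ray_natDegree_le {p : ℕ} (φ : MvPolynomial (Fin p) ℚ) (a : Fin p → ℕ) :
    (ray φ a).natDegree ≤ φ.totalDegree := by
  rw [ray_expand]
  refine Polynomial.natDegree_sum_le_of_forall_le _ _ fun d hd => ?_
  exact (Polynomial.natDegree_monomial_le _).trans (MvPolynomial.le_totalDegree hd)

lemma ray_coeff {p : ℕ} (φ : MvPolynomial (Fin p) ℚ) (a : Fin p → ℕ) (N : ℕ) :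
    (ray φ a).coeff N =
      MvPolynomial.eval (fun j => (a j : ℚ)) (MvPolynomial.homogeneousComponent N φ) := by
  rw [ray_expand, MvPolynomial.homogeneousComponent_apply, map_sum, Polynomial.finsetSum_coeff,
    Finset.sum_filter]
  refine Finset.sum_congr rfl fun d _ => ?_
  rw [Polynomial.coeff_monomial]
  split_ifs
  · rw [MvPolynomial.eval_monomial, Finsupp.prod_fintype _ _ (by simp)]
  · rfl

lemma exists_ray {p : ℕ} (φ : MvPolynomial (Fin p) ℚ) :
    ∃ a : Fin p → ℕ, (∀ j, 1 ≤ a j) ∧ φ.totalDegree ≤ (ray φ a).natDegree := by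
  classical
  by_cases hφ : φ = 0
  · exact ⟨fun _ => 1, fun _ => le_rfl, by simp [hφ]⟩
  have hne : MvPolynomial.homogeneousComponent φ.totalDegree φ ≠ 0 := by
    obtain ⟨d, hd, hd2⟩ := Finset.exists_mem_eq_sup φ.support
      (MvPolynomial.support_nonempty.2 hφ) (fun s => s.sum fun _ e => e)
    intro h
    have h2 := congrArg (MvPolynomial.coeff d) h
    rw [MvPolynomial.coeff_homogeneousComponent, if_pos] at h2
    · exact (MvPolynomial.mem_support_iff.1 hd) (by simpa using h2)
    · exact hd2.symm
  by_contra hcon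
  push Not at hcon
  apply hne
  have hinf : (Set.range (fun k : ℕ => ((k + 1 : ℕ) : ℚ))).Infinite :=
    Set.infinite_range_of_injective fun x y h => by simpa using h
  refine MvPolynomial.funext_set (fun _ => Set.range (fun k : ℕ => ((k + 1 : ℕ) : ℚ)))
    (fun _ => hinf) ?_
  intro x hx
  choose b hb using fun j => hx j (Set.mem_univ j)
  have hx' : x = fun j => ((b j + 1 : ℕ) : ℚ) := funext fun j => (hb j).symm
  rw [hx', ← ray_coeff φ (fun j => b j + 1), map_zero]
  exact Polynomial.coeff_eq_zero_of_natDegree_lt (hcon _ fun j => by omega)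

/-! Abstract Bernstein inequality. -/

section Bern
variable {σ K V : Type*} [Field K] [AddCommGroup V] [Module K V]

/-- The operator attached to a formal symbol. -/
noncomputable def symOp (op : (σ →₀ ℕ) → (V →ₗ[K] V)) : MvPolynomial σ K →ₗ[K] (V →ₗ[K] V) :=
  (MvPolynomial.basisMonomials σ K).constr K op

lemma symOp_monomial (op : (σ →₀ ℕ) → (V →ₗ[K] V)) (a : σ →₀ ℕ) (t : K) :
    symOp op (MvPolynomial.monomial a t) = t • op a := by
  have : MvPolynomial.monomial a t = t • (MvPolynomial.basisMonomials σ K a) := by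
    simp [MvPolynomial.smul_monomial]
  rw [this, map_smul, symOp, Module.Basis.constr_basis]

lemma bernstein_inj [Fintype σ] [CharZero K] (op : (σ →₀ ℕ) → (V →ₗ[K] V)) (Z : σ → (V →ₗ[K] V))
    (hZ : ∀ l a x, Z l (op a x) - op a (Z l x) = (a l : K) • op (a - Finsupp.single l 1) x)
    (h0 : ∀ x, op 0 x = x) (F : ℕ → Submodule K V) (hF : Monotone F)
    (hZF : ∀ l r, ∀ x ∈ F r, Z l x ∈ F (r + 1)) (x0 : V) (hx0 : x0 ∈ F 0) (hx0' : x0 ≠ 0)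
    (r : ℕ) (c : MvPolynomial σ K) (hc : ∀ b, c.coeff b ≠ 0 → ∑ l, b l ≤ r)
    (hkill : ∀ x ∈ F r, symOp op c x = 0) : c = 0 := by
  classical
  have hcomm : ∀ l (c : MvPolynomial σ K) x,
      Z l (symOp op c x) - symOp op c (Z l x) = symOp op (MvPolynomial.pderiv l c) x := by
    intro l c x
    induction c using MvPolynomial.induction_on' with
    | monomial a t =>
      rw [MvPolynomial.pderiv_monomial, symOp_monomial, symOp_monomial]
      simp only [LinearMap.smul_apply, map_smul]
      rw [← smul_sub, hZ, smul_smul]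
    | add p q hp hq =>
      simp only [map_add, LinearMap.add_apply]
      rw [← hp, ← hq]; abel
  have hconst : ∀ c : MvPolynomial σ K, (∀ b, b ≠ 0 → c.coeff b = 0) →
      symOp op c x0 = 0 → c = 0 := by
    intro c h1 h2
    have hc0 : c = MvPolynomial.monomial 0 (c.coeff 0) := by
      ext b
      rw [MvPolynomial.coeff_monomial]
      split_ifs with h
      · rw [h]
      · exact h1 b (Ne.symm h)
    rw [hc0, symOp_monomial, LinearMap.smul_apply, h0] at h2
    rw [hc0, (smul_eq_zero.1 h2).resolve_right hx0', map_zero]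
  induction r generalizing c with
  | zero =>
    refine hconst c (fun b hb => ?_) (hkill x0 hx0)
    by_contra h
    apply hb
    ext l
    have := (Finset.sum_eq_zero_iff.1 (Nat.le_zero.1 (hc b h))) l (Finset.mem_univ l)
    simpa using this
  | succ r ih =>
    have hder : ∀ l, MvPolynomial.pderiv l c = 0 := by
      intro l
      refine ih _ (fun b hb => ?_) (fun x hx => ?_)
      · rw [MvPolynomial.coeff_pderiv] at hb
        have := hc _ (left_ne_zero_of_mul hb)
        simp [Finset.sum_add_distrib, Finsupp.single_apply] at this
        exact this
      · rw [← hcomm, hkill x (hF (Nat.le_succ r) hx), hkill _ (hZF l r x hx), map_zero, sub_zero]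
    refine hconst c (fun b hb => ?_) (hkill x0 (hF (Nat.zero_le _) hx0))
    obtain ⟨l, hl⟩ : ∃ l, b l ≠ 0 := by
      by_contra hcon
      push Not at hcon
      exact hb (Finsupp.ext hcon)
    have h1 := MvPolynomial.coeff_pderiv (i := l) c (b - Finsupp.single l 1)
    rw [hder l] at h1
    have h2 : b - Finsupp.single l 1 + Finsupp.single l 1 = b := by
      ext t
      by_cases h : l = t
      · subst h; simp; omega
      · simp [h]
    rw [h2] at h1
    have h3 : (((b - Finsupp.single l 1 : σ →₀ ℕ) l : K) + 1) ≠ 0 := by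
      exact Nat.cast_add_one_ne_zero _
    have h4 := h1.symm
    rw [MvPolynomial.coeff_zero] at h4
    exact (mul_eq_zero.1 h4).resolve_right h3

lemma bernstein_card [Fintype σ] [CharZero K] (op : (σ →₀ ℕ) → (V →ₗ[K] V)) (Z : σ → (V →ₗ[K] V))
    (hZ : ∀ l a x, Z l (op a x) - op a (Z l x) = (a l : K) • op (a - Finsupp.single l 1) x)
    (h0 : ∀ x, op 0 x = x) (F : ℕ → Submodule K V) (hF : Monotone F)
    (hZF : ∀ l r, ∀ x ∈ F r, Z l x ∈ F (r + 1)) (x0 : V) (hx0 : x0 ∈ F 0) (hx0' : x0 ≠ 0)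
    (hop : ∀ a r, ∀ x ∈ F r, op a x ∈ F (r + ∑ l, a l))
    (hfin : ∀ r, FiniteDimensional K (F r)) (k : ℕ) :
    (k + 1) ^ Fintype.card σ ≤ Module.finrank K (F (Fintype.card σ * k)) *
      Module.finrank K (F (Fintype.card σ * k + Fintype.card σ * k)) := by
  classical
  set R := Fintype.card σ * k with hR
  let e : (σ → Fin (k + 1)) → (σ →₀ ℕ) := fun b => Finsupp.equivFunOnFinite.symm fun l => (b l : ℕ)
  have he : Function.Injective e := by
    intro a b h
    have h' := Finsupp.equivFunOnFinite.symm.injective h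
    funext l
    exact Fin.ext (congrFun h' l)
  have hdeg : ∀ b, ∑ l, e b l ≤ R := by
    intro b
    calc ∑ l, e b l ≤ ∑ _l : σ, k := Finset.sum_le_sum fun l _ => Nat.lt_succ_iff.1 (b l).2
      _ = R := by simp [hR]
  let w : (σ → Fin (k + 1)) → (F R →ₗ[K] F (R + R)) := fun b =>
    (op (e b)).restrict fun x hx => hF (Nat.add_le_add_left (hdeg b) R) (hop (e b) R x hx)
  have hw : LinearIndependent K w := by
    rw [Fintype.linearIndependent_iff]
    intro t ht
    let c : MvPolynomial σ K := ∑ b, MvPolynomial.monomial (e b) (t b)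
    have hc : c = 0 := by
      refine bernstein_inj op Z hZ h0 F hF hZF x0 hx0 hx0' R c (fun d hd => ?_) fun x hx => ?_
      · obtain ⟨b, -, hb⟩ : ∃ b ∈ Finset.univ,
            (MvPolynomial.monomial (e b) (t b)).coeff d ≠ 0 := by
          apply Finset.exists_ne_zero_of_sum_ne_zero
          rwa [← MvPolynomial.coeff_sum]
        rw [MvPolynomial.coeff_monomial] at hb
        have : e b = d := by
          by_contra h; simp [h] at hb
        rw [← this]; exact hdeg b
      · have h1 := congrArg Subtype.val (LinearMap.congr_fun ht ⟨x, hx⟩)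
        simp only [c, map_sum, symOp_monomial, LinearMap.sum_apply, LinearMap.smul_apply]
        simpa [w, LinearMap.sum_apply] using h1
    intro b
    have h1 := congrArg (MvPolynomial.coeff (e b)) hc
    simpa [c, MvPolynomial.coeff_sum, MvPolynomial.coeff_monomial, he.eq_iff] using h1
  have := hw.fintype_card_le_finrank
  rw [Module.finrank_linearMap] at this
  simpa using this

end Bern

/-! Weyl algebra relations. -/

lemma list_prod_mul_left {A : Type*} [Monoid A] {ι : Type*} [DecidableEq ι] (f : ι → A)
    (hf : ∀ i j, f i * f j = f j * f i) (a : ι → ℕ) (k : ι) (l : List ι) (hl : l.Nodup)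
    (hk : k ∈ l) :
    f k * (l.map fun i => f i ^ a i).prod = (l.map fun i => f i ^ (a + Pi.single k 1 : ι → ℕ) i).prod := by
  induction l with
  | nil => simp at hk
  | cons b l ih =>
    rw [List.nodup_cons] at hl
    simp only [List.map_cons, List.prod_cons]
    by_cases h : b = k
    · subst h
      have : (l.map fun i => f i ^ (a + Pi.single b 1 : ι → ℕ) i) = l.map fun i => f i ^ a i := by
        refine List.map_congr_left fun i hi => ?_
        have : i ≠ b := fun h => hl.1 (h ▸ hi)
        simp [this]
      rw [this, ← mul_assoc, ← pow_succ']
      simp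
    · have hkl : k ∈ l := by
        rcases List.mem_cons.1 hk with h' | h'
        · exact absurd h'.symm h
        · exact h'
      rw [← ih hl.2 hkl, ← mul_assoc, ← mul_assoc]
      congr 1
      have : (f k) * f b ^ a b = f b ^ a b * f k :=
        ((show Commute (f k) (f b) from hf k b).pow_right _)
      simp [this, h]

section Weyl
variable (n : ℕ) (K : Type) [Field K]

lemma wx_comm (i j : Fin n) : wx n K i * wx n K j = wx n K j * wx n K i := by
  apply Subtype.ext
  apply LinearMap.ext
  intro f
  show (X i : MvPolynomial (Fin n) K) * (X j * f) = X j * (X i * f)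
  ring

lemma pderiv_comm' (i j : Fin n) (f : MvPolynomial (Fin n) K) :
    pderiv i (pderiv j f) = pderiv j (pderiv i f) := by
  classical
  have h : ⁅(pderiv i : Derivation K (MvPolynomial (Fin n) K) (MvPolynomial (Fin n) K)),
      (pderiv j : Derivation K (MvPolynomial (Fin n) K) (MvPolynomial (Fin n) K))⁆ = 0 := by
    apply MvPolynomial.derivation_ext
    intro l
    rw [Derivation.commutator_apply, pderiv_X, pderiv_X]
    simp only [Pi.single_apply]
    split_ifs <;> simp
  have h2 := congrArg (fun D => D f) h
  simp only [Derivation.commutator_apply, Derivation.coe_zero, Pi.zero_apply] at h2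
  exact sub_eq_zero.1 h2

lemma wd_comm (i j : Fin n) : wd n K i * wd n K j = wd n K j * wd n K i := by
  apply Subtype.ext
  apply LinearMap.ext
  intro f
  exact pderiv_comm' n K i j f

lemma wx_mul_wMono (k : Fin n) (α β : Fin n → ℕ) :
    wx n K k * wMono n K α β = wMono n K (α + Pi.single k 1) β := by
  unfold wMono
  rw [← mul_assoc, list_prod_mul_left _ (wx_comm n K) α k _ (List.nodup_finRange n)
    (List.mem_finRange k)]

lemma wd_mul_wx (k i : Fin n) :
    wd n K k * wx n K i = wx n K i * wd n K k + (if k = i then 1 else 0) := by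
  apply Subtype.ext
  apply LinearMap.ext
  intro f
  have h : pderiv k (X i * f) = X i * pderiv k f + (if k = i then f else 0) := by
    classical
    rw [pderiv_mul, pderiv_X]
    by_cases h : k = i
    · subst h; simp [add_comm]
    · simp [h, Ne.symm h]
  by_cases hk : k = i
  · simp only [hk, if_true] at h ⊢
    exact h
  · simp only [hk, if_false, add_zero] at h ⊢
    exact h

lemma wMono_one : wMono n K 0 0 = 1 := by
  have h : ∀ l : List (Fin n), (l.map fun _ => (1 : WeylAlg n K)).prod = 1 := by
    intro l
    induction l with
    | nil => rfl
    | cons a l ih => rw [List.map_cons, List.prod_cons, ih, mul_one]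
  unfold wMono
  simp only [Pi.zero_apply, pow_zero, h, mul_one]

lemma wMono_zero_right_mul (α β : Fin n → ℕ) :
    wMono n K α 0 * wMono n K 0 β = wMono n K α β := by
  have h : ∀ l : List (Fin n), (l.map fun _ => (1 : WeylAlg n K)).prod = 1 := by
    intro l
    induction l with
    | nil => rfl
    | cons a l ih => rw [List.map_cons, List.prod_cons, ih, mul_one]
  unfold wMono
  simp only [Pi.zero_apply, pow_zero, h, mul_one, one_mul]

lemma wd_mul_wMono_zero (k : Fin n) (β : Fin n → ℕ) :
    wd n K k * wMono n K 0 β = wMono n K 0 (β + Pi.single k 1) := by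
  have h : ∀ l : List (Fin n), (l.map fun _ => (1 : WeylAlg n K)).prod = 1 := by
    intro l
    induction l with
    | nil => rfl
    | cons a l ih => rw [List.map_cons, List.prod_cons, ih, mul_one]
  unfold wMono
  simp only [Pi.zero_apply, pow_zero, h, one_mul]
  rw [list_prod_mul_left _ (wd_comm n K) β k _ (List.nodup_finRange n) (List.mem_finRange k)]

lemma exp_induction {n : ℕ} {P : (Fin n → ℕ) → Prop} (h0 : P 0)
    (h1 : ∀ a i, P a → P (a + Pi.single i 1)) (a : Fin n → ℕ) : P a := by
  induction hc : ∑ t, a t generalizing a with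
  | zero =>
    have : a = 0 := by
      ext t; simpa using (Finset.sum_eq_zero_iff.1 hc) t (Finset.mem_univ t)
    rwa [this]
  | succ d ih =>
    obtain ⟨l, hl⟩ : ∃ l, a l ≠ 0 := by
      by_contra hcon
      push Not at hcon
      simp [hcon] at hc
    have hcl : a - Pi.single l 1 + Pi.single l 1 = a := by
      ext t
      by_cases h : t = l
      · subst h; simp; omega
      · simp [h]
    have hs : ∑ t, (a - Pi.single l 1 : Fin n → ℕ) t = d := by
      have : ∑ t, (a - Pi.single l 1 + Pi.single l 1 : Fin n → ℕ) t = d + 1 := by rw [hcl, hc]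
      simp only [Pi.add_apply, Finset.sum_add_distrib, Finset.sum_pi_single'] at this
      simpa using this
    rw [← hcl]
    exact h1 _ l (ih _ hs)

lemma pi_add_single_sub_of_ne {n : ℕ} (a : Fin n → ℕ) (i k : Fin n) (h : k ≠ i) :
    a + Pi.single i 1 - Pi.single k 1 = a - Pi.single k 1 + Pi.single i 1 := by
  ext t
  by_cases h1 : t = i
  · subst h1
    simp [Ne.symm h]
  · simp [h1]

lemma pi_sub_add_single {n : ℕ} (a : Fin n → ℕ) (k : Fin n) (h : a k ≠ 0) :
    a - Pi.single k 1 + Pi.single k 1 = a := by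
  ext t
  by_cases h1 : t = k
  · subst h1; simp; omega
  · simp [h1]

/-- `[∂_k, x^α] = α_k x^(α - e_k)`. -/
lemma wd_mul_wMono_left (k : Fin n) (α : Fin n → ℕ) :
    wd n K k * wMono n K α 0 = wMono n K α 0 * wd n K k +
      (α k : K) • wMono n K (α - Pi.single k 1) 0 := by
  induction α using exp_induction with
  | h0 => simp [wMono_one]
  | h1 α i ih =>
    rw [← wx_mul_wMono, ← mul_assoc, wd_mul_wx, add_mul, mul_assoc, ih, mul_add, mul_assoc,
      add_assoc]
    congr 1
    rw [mul_smul_comm, wx_mul_wMono]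
    by_cases h : k = i
    · subst h
      simp only [if_true, one_mul, Pi.add_apply, Pi.single_eq_same, Nat.cast_add, Nat.cast_one,
        add_smul, one_smul]
      have e1 : α + Pi.single k 1 - Pi.single k 1 = α := add_tsub_cancel_right _ _
      rw [e1]
      congr 1
      by_cases h0 : α k = 0
      · simp [h0]
      · rw [pi_sub_add_single α k h0]
    · rw [pi_add_single_sub_of_ne α i k h]
      simp [h]

lemma wd_mul_wMono (k : Fin n) (α β : Fin n → ℕ) :
    wd n K k * wMono n K α β = wMono n K α (β + Pi.single k 1) +
      (α k : K) • wMono n K (α - Pi.single k 1) β := by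
  rw [← wMono_zero_right_mul, ← mul_assoc, wd_mul_wMono_left, add_mul, mul_assoc,
    wd_mul_wMono_zero, wMono_zero_right_mul, smul_mul_assoc, wMono_zero_right_mul]

/-- `[∂^β, x_k] = β_k ∂^(β - e_k)`. -/
lemma wMono_right_mul_wx (k : Fin n) (β : Fin n → ℕ) :
    wMono n K 0 β * wx n K k = wx n K k * wMono n K 0 β +
      (β k : K) • wMono n K 0 (β - Pi.single k 1) := by
  induction β using exp_induction with
  | h0 => simp [wMono_one]
  | h1 β i ih =>
    rw [← wd_mul_wMono_zero, mul_assoc, ih, mul_add, ← mul_assoc, wd_mul_wx, add_mul, mul_assoc,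
      add_assoc]
    congr 1
    rw [mul_smul_comm, wd_mul_wMono_zero]
    by_cases h : i = k
    · subst h
      simp only [if_true, one_mul, Pi.add_apply, Pi.single_eq_same, Nat.cast_add, Nat.cast_one,
        add_smul, one_smul]
      have e1 : β + Pi.single i 1 - Pi.single i 1 = β := add_tsub_cancel_right _ _
      rw [e1, add_comm]
      congr 1
      by_cases h0 : β i = 0
      · simp [h0]
      · rw [pi_sub_add_single β i h0]
    · rw [pi_add_single_sub_of_ne β i k (Ne.symm h)]
      simp [h, Ne.symm h]

lemma wMono_mul_wx (k : Fin n) (α β : Fin n → ℕ) :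
    wMono n K α β * wx n K k = wx n K k * wMono n K α β +
      (β k : K) • wMono n K α (β - Pi.single k 1) := by
  have hc : wMono n K α 0 * wx n K k = wx n K k * wMono n K α 0 := by
    induction α using exp_induction with
    | h0 => simp [wMono_one]
    | h1 α i ih =>
      rw [← wx_mul_wMono, mul_assoc, ih, ← mul_assoc, wx_comm, mul_assoc]
  rw [← wMono_zero_right_mul, mul_assoc, wMono_right_mul_wx, mul_add, ← mul_assoc, hc, mul_assoc,
    mul_smul_comm, wMono_zero_right_mul, wMono_zero_right_mul]

lemma wMono_mul_wd (k : Fin n) (α β : Fin n → ℕ) :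
    wMono n K α β * wd n K k = wMono n K α (β + Pi.single k 1) := by
  have hc : wMono n K 0 β * wd n K k = wd n K k * wMono n K 0 β := by
    induction β using exp_induction with
    | h0 => simp [wMono_one]
    | h1 β i ih =>
      rw [← wd_mul_wMono_zero, mul_assoc, ih, ← mul_assoc, wd_comm, mul_assoc]
  rw [← wMono_zero_right_mul, mul_assoc, hc, wd_mul_wMono_zero, wMono_zero_right_mul]

/-- The Weyl algebra is spanned by the monomials. -/
lemma span_wMono : Submodule.span K {D | ∃ α β : Fin n → ℕ, D = wMono n K α β} = ⊤ := by
  set S := Submodule.span K {D | ∃ α β : Fin n → ℕ, D = wMono n K α β} with hS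
  have hx : ∀ k, ∀ y ∈ S, wx n K k * y ∈ S := by
    intro k
    have : S ≤ S.comap (LinearMap.mulLeft K (wx n K k)) := by
      conv_lhs => rw [hS]
      rw [Submodule.span_le]
      rintro _ ⟨α, β, rfl⟩
      show wx n K k * _ ∈ S
      rw [wx_mul_wMono]
      exact Submodule.subset_span ⟨_, _, rfl⟩
    exact this
  have hd : ∀ k, ∀ y ∈ S, wd n K k * y ∈ S := by
    intro k
    have : S ≤ S.comap (LinearMap.mulLeft K (wd n K k)) := by
      conv_lhs => rw [hS]
      rw [Submodule.span_le]
      rintro _ ⟨α, β, rfl⟩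
      show wd n K k * _ ∈ S
      rw [wd_mul_wMono]
      exact S.add_mem (Submodule.subset_span ⟨_, _, rfl⟩)
        (S.smul_mem _ (Submodule.subset_span ⟨_, _, rfl⟩))
    exact this
  have h1 : (1 : WeylAlg n K) ∈ S := Submodule.subset_span ⟨0, 0, (wMono_one n K).symm⟩
  have key : ∀ D (hD : D ∈ WeylAlg n K), ∀ y ∈ S, (⟨D, hD⟩ : WeylAlg n K) * y ∈ S := by
    intro D hD
    induction hD using Algebra.adjoin_induction with
    | mem D hD =>
      rcases hD with ⟨k, rfl⟩ | ⟨k, rfl⟩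
      · exact hx k
      · exact hd k
    | algebraMap c =>
      intro y hy
      have : (⟨algebraMap K _ c, (WeylAlg n K).algebraMap_mem c⟩ : WeylAlg n K) * y = c • y := by
        rw [Algebra.smul_def]; rfl
      exact this ▸ S.smul_mem c hy
    | add D E hD hE ihD ihE =>
      intro y hy
      have := S.add_mem (ihD y hy) (ihE y hy)
      rw [← add_mul] at this
      exact this
    | mul D E hD hE ihD ihE =>
      intro y hy
      have := ihD _ (ihE y hy)
      rw [← mul_assoc] at this
      exact this
  rw [eq_top_iff]
  intro D _
  have := key D.1 D.2 1 h1
  rwa [mul_one] at this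

end Weyl

/-! Filtrations of modules. -/

section Filt
variable (n : ℕ) (K : Type) [Field K] (M : Type) [AddCommGroup M] [Module K M]
  [Module (WeylAlg n K) M] [IsScalarTower K (WeylAlg n K) M] (m : ℕ) (g : Fin m → M)

/-- The action of an element of the Weyl algebra as a `K`-linear map. -/
noncomputable def act (D : WeylAlg n K) : M →ₗ[K] M := Algebra.lsmul K K M D

lemma act_apply (D : WeylAlg n K) (x : M) : act n K M D x = D • x := rfl

lemma span_smul_gen (S : Set (WeylAlg n K)) :
    Submodule.span K {x | ∃ i, ∃ D ∈ Submodule.span K S, x = D • g i} =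
      Submodule.span K {x | ∃ i, ∃ D ∈ S, x = D • g i} := by
  apply le_antisymm
  · rw [Submodule.span_le]
    rintro _ ⟨i, D, hD, rfl⟩
    set U := Submodule.span K {x | ∃ i, ∃ D ∈ S, x = D • g i} with hU
    show D • g i ∈ U
    induction hD using Submodule.span_induction with
    | mem D hD => exact Submodule.subset_span ⟨i, D, hD, rfl⟩
    | zero => rw [zero_smul]; exact U.zero_mem
    | add D E _ _ h1 h2 => rw [add_smul]; exact U.add_mem h1 h2
    | smul c D _ h => rw [smul_assoc]; exact U.smul_mem c h
  · refine Submodule.span_mono ?_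
    rintro _ ⟨i, D, hD, rfl⟩
    exact ⟨i, D, Submodule.subset_span hD, rfl⟩

lemma modFil_eq (r : ℤ) : modFil n K M m g r = Submodule.span K
    {x | ∃ i, ∃ D ∈ {D | ∃ α β : Fin n → ℕ, (ordTot n α β : ℤ) ≤ r ∧ D = wMono n K α β},
      x = D • g i} :=
  span_smul_gen n K M m g _

lemma modFilB_eq (p : ℕ) (B : Fin n → Fin p) (r : Fin p → ℤ) :
    modFilB n p K B M m g r = Submodule.span K
    {x | ∃ i, ∃ D ∈ {D | ∃ α β : Fin n → ℕ, (∀ j, (ordBlk B α β j : ℤ) ≤ r j) ∧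
      D = wMono n K α β}, x = D • g i} :=
  span_smul_gen n K M m g _

lemma mem_modFil (r : ℤ) (α β : Fin n → ℕ) (h : (ordTot n α β : ℤ) ≤ r) (i : Fin m) :
    wMono n K α β • g i ∈ modFil n K M m g r := by
  rw [modFil_eq]
  exact Submodule.subset_span ⟨i, _, ⟨α, β, h, rfl⟩, rfl⟩

lemma modFil_le {r : ℤ} {U : Submodule K M} (h : ∀ α β : Fin n → ℕ, (ordTot n α β : ℤ) ≤ r →
    ∀ i, wMono n K α β • g i ∈ U) : modFil n K M m g r ≤ U := by
  rw [modFil_eq, Submodule.span_le]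
  rintro _ ⟨i, _, ⟨α, β, hab, rfl⟩, rfl⟩
  exact h α β hab i

lemma modFil_mono {r s : ℤ} (h : r ≤ s) : modFil n K M m g r ≤ modFil n K M m g s :=
  modFil_le n K M m g fun α β hab i => mem_modFil n K M m g s α β (hab.trans h) i

lemma ordTot_add_left (α β : Fin n → ℕ) (k : Fin n) :
    ordTot n (α + Pi.single k 1) β = ordTot n α β + 1 := by
  simp [ordTot, Finset.sum_add_distrib]; omega

lemma ordTot_add_right (α β : Fin n → ℕ) (k : Fin n) :
    ordTot n α (β + Pi.single k 1) = ordTot n α β + 1 := by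
  simp [ordTot, Finset.sum_add_distrib]; omega

lemma ordTot_sub_left (α β : Fin n → ℕ) (k : Fin n) :
    ordTot n (α - Pi.single k 1) β ≤ ordTot n α β := by
  unfold ordTot
  gcongr with i
  exact Nat.sub_le _ _

lemma ordTot_eq_sum_blk {p : ℕ} (B : Fin n → Fin p) (α β : Fin n → ℕ) :
    ordTot n α β = ∑ j, ordBlk B α β j := by
  unfold ordTot ordBlk
  rw [Finset.sum_fiberwise, Finset.sum_add_distrib]

lemma modFil_le_modFilB (p : ℕ) (B : Fin n → Fin p) (r : ℤ) :
    modFil n K M m g r ≤ modFilB n p K B M m g (fun _ => r) := by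
  refine modFil_le n K M m g fun α β hab i => ?_
  rw [modFilB_eq]
  refine Submodule.subset_span ⟨i, _, ⟨α, β, fun j => le_trans ?_ hab, rfl⟩, rfl⟩
  rw [ordTot_eq_sum_blk n B]
  exact_mod_cast Finset.single_le_sum (f := ordBlk B α β) (fun _ _ => Nat.zero_le _)
    (Finset.mem_univ j)

lemma modFilB_le_modFil (p : ℕ) (B : Fin n → Fin p) (r : Fin p → ℤ) :
    modFilB n p K B M m g r ≤ modFil n K M m g (∑ j, r j) := by
  rw [modFilB_eq, Submodule.span_le]
  rintro _ ⟨i, _, ⟨α, β, hab, rfl⟩, rfl⟩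
  refine mem_modFil n K M m g _ α β ?_ i
  rw [ordTot_eq_sum_blk n B]
  push_cast
  exact Finset.sum_le_sum fun j _ => hab j

/-- The family of vectors indexed by combined exponents. -/
noncomputable def vfam (y : (Fin (n + n) → ℕ) × Fin m) : M :=
  wMono n K (fun t => y.1 (Fin.castAdd n t)) (fun t => y.1 (Fin.natAdd n t)) • g y.2

lemma modFil_eq_vfam (r : ℕ) : modFil n K M m g (r : ℤ) =
    Submodule.span K (vfam n K M m g '' {y | ∑ t, y.1 t ≤ r}) := by
  apply le_antisymm
  · refine modFil_le n K M m g fun α β hab i => ?_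
    refine Submodule.subset_span ⟨(Fin.append α β, i), ?_, ?_⟩
    · show ∑ t, Fin.append α β t ≤ r
      rw [Fin.sum_univ_add]
      simp only [Fin.append_left, Fin.append_right]
      exact_mod_cast hab
    · simp only [vfam, Fin.append_left, Fin.append_right]
  · rw [Submodule.span_le]
    rintro _ ⟨⟨a, i⟩, ha, rfl⟩
    refine mem_modFil n K M m g _ _ _ ?_ i
    have ha' : ∑ t, a t ≤ r := ha
    rw [Fin.sum_univ_add] at ha'
    exact_mod_cast ha'

instance modFil_finite (r : ℤ) : FiniteDimensional K (modFil n K M m g r) := by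
  have h : FiniteDimensional K (modFil n K M m g (r.toNat : ℤ)) := by
    rw [modFil_eq_vfam]
    apply FiniteDimensional.span_of_finite
    apply Set.Finite.image
    exact ((finite_sum_le r.toNat).prod (Set.finite_univ (α := Fin m))).subset
      fun y hy => ⟨hy, Set.mem_univ _⟩
  exact Submodule.finiteDimensional_of_le (modFil_mono n K M m g (Int.self_le_toNat r))

instance modFilB_finite (p : ℕ) (B : Fin n → Fin p) (r : Fin p → ℤ) :
    FiniteDimensional K (modFilB n p K B M m g r) :=
  Submodule.finiteDimensional_of_le (modFilB_le_modFil n K M m g p B r)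

lemma wx_smul_modFil (k : Fin n) (r : ℤ) (x : M) (hx : x ∈ modFil n K M m g r) :
    wx n K k • x ∈ modFil n K M m g (r + 1) := by
  have : modFil n K M m g r ≤ (modFil n K M m g (r + 1)).comap (act n K M (wx n K k)) := by
    refine modFil_le n K M m g fun α β hab i => ?_
    rw [Submodule.mem_comap, act_apply, ← mul_smul, wx_mul_wMono]
    refine mem_modFil n K M m g _ _ _ ?_ i
    rw [ordTot_add_left]; push_cast; omega
  exact this hx

lemma wd_smul_modFil (k : Fin n) (r : ℤ) (x : M) (hx : x ∈ modFil n K M m g r) :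
    wd n K k • x ∈ modFil n K M m g (r + 1) := by
  have : modFil n K M m g r ≤ (modFil n K M m g (r + 1)).comap (act n K M (wd n K k)) := by
    refine modFil_le n K M m g fun α β hab i => ?_
    rw [Submodule.mem_comap, act_apply, ← mul_smul, wd_mul_wMono, add_smul, smul_assoc]
    refine Submodule.add_mem _ (mem_modFil n K M m g _ _ _ ?_ i)
      (Submodule.smul_mem _ _ (mem_modFil n K M m g _ _ _ ?_ i))
    · rw [ordTot_add_right]; push_cast; omega
    · have := ordTot_sub_left n α β k
      omega
  exact this hx

lemma wMono_smul_modFil (α β : Fin n → ℕ) (r : ℤ) (x : M) (hx : x ∈ modFil n K M m g r) :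
    wMono n K α β • x ∈ modFil n K M m g (r + ordTot n α β) := by
  induction α using exp_induction with
  | h0 =>
    induction β using exp_induction with
    | h0 => rw [wMono_one, one_smul]; simpa [ordTot] using hx
    | h1 β k ih =>
      rw [← wd_mul_wMono_zero, mul_smul, ordTot_add_right]
      have := wd_smul_modFil n K M m g k _ _ ih
      push_cast
      rwa [← add_assoc]
  | h1 α k ih =>
    rw [← wx_mul_wMono, mul_smul, ordTot_add_left]
    have := wx_smul_modFil n K M m g k _ _ ih
    push_cast
    rwa [← add_assoc]

lemma exists_mem_modFil (hgen : Submodule.span (WeylAlg n K) (Set.range g) = ⊤) (x : M) :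
    ∃ c : ℕ, x ∈ modFil n K M m g (c : ℤ) := by
  have hx : x ∈ Submodule.span (WeylAlg n K) (Set.range g) := hgen ▸ Submodule.mem_top
  have hadd : ∀ y z : M, (∃ c : ℕ, y ∈ modFil n K M m g (c : ℤ)) →
      (∃ c : ℕ, z ∈ modFil n K M m g (c : ℤ)) → ∃ c : ℕ, y + z ∈ modFil n K M m g (c : ℤ) := by
    rintro y z ⟨c, hc⟩ ⟨d, hd⟩
    exact ⟨c + d, Submodule.add_mem _ (modFil_mono n K M m g (by push_cast; omega) hc)
      (modFil_mono n K M m g (by push_cast; omega) hd)⟩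
  induction hx using Submodule.span_induction with
  | mem y hy =>
    obtain ⟨i, rfl⟩ := hy
    refine ⟨0, ?_⟩
    have := mem_modFil n K M m g (0 : ℕ) 0 0 (by simp [ordTot]) i
    rwa [wMono_one, one_smul] at this
  | zero => exact ⟨0, Submodule.zero_mem _⟩
  | add y z _ _ hy hz => exact hadd y z hy hz
  | smul D y _ hy =>
    obtain ⟨c, hc⟩ := hy
    have hD : D ∈ Submodule.span K {D | ∃ α β : Fin n → ℕ, D = wMono n K α β} := by
      rw [span_wMono]; exact Submodule.mem_top
    induction hD using Submodule.span_induction with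
    | mem D hD =>
      obtain ⟨α, β, rfl⟩ := hD
      exact ⟨c + ordTot n α β, by
        push_cast; exact wMono_smul_modFil n K M m g α β c y hc⟩
    | zero => exact ⟨0, by rw [zero_smul]; exact Submodule.zero_mem _⟩
    | add D E _ _ h1 h2 => rw [add_smul]; exact hadd _ _ h1 h2
    | smul t D _ h =>
      obtain ⟨d, hd⟩ := h
      exact ⟨d, by rw [smul_assoc]; exact Submodule.smul_mem _ _ hd⟩

/-- Existence of the Bernstein polynomial. -/
lemma bernstein_poly_exists :
    EvPoly (fun r => (Module.finrank K (modFil n K M m g (r : ℤ)) : ℚ)) := by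
  have hfun : (fun r : ℕ => (Module.finrank K (modFil n K M m g (r : ℤ)) : ℚ)) =
      fun r => (Module.finrank K
        (Submodule.span K (vfam n K M m g '' {y | ∑ t, y.1 t ≤ r})) : ℚ) := by
    funext r
    rw [modFil_eq_vfam]
  rw [hfun]
  refine hilbert_exists (vfam n K M m g)
    (Fin.addCases (fun k => act n K M (wx n K k)) (fun k => act n K M (wd n K k))) ?_
  intro l a i
  refine Fin.addCases (fun k => ?_) (fun k => ?_) l
  · have h1 : (fun t => (a + Pi.single (Fin.castAdd n k) 1 : Fin (n + n) → ℕ) (Fin.castAdd n t)) =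
        (fun t => a (Fin.castAdd n t)) + Pi.single k 1 := by
      ext t; simp [Pi.single_apply]
    have h2 : (fun t => (a + Pi.single (Fin.castAdd n k) 1 : Fin (n + n) → ℕ) (Fin.natAdd n t)) =
        (fun t => a (Fin.natAdd n t)) := by
      ext t
      have : Fin.natAdd n t ≠ Fin.castAdd n k := by
        intro h; have := congrArg Fin.val h; simp at this; omega
      rw [Pi.add_apply, Pi.single_eq_of_ne this, add_zero]
    rw [Fin.addCases_left, act_apply]
    unfold vfam
    dsimp only
    rw [h1, h2, ← mul_smul, wx_mul_wMono, sub_self]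
    exact Submodule.zero_mem _
  · have h1 : (fun t => (a + Pi.single (Fin.natAdd n k) 1 : Fin (n + n) → ℕ) (Fin.natAdd n t)) =
        (fun t => a (Fin.natAdd n t)) + Pi.single k 1 := by
      ext t; simp [Pi.single_apply]
    have h2 : (fun t => (a + Pi.single (Fin.natAdd n k) 1 : Fin (n + n) → ℕ) (Fin.castAdd n t)) =
        (fun t => a (Fin.castAdd n t)) := by
      ext t
      have : Fin.castAdd n t ≠ Fin.natAdd n k := by
        intro h; have := congrArg Fin.val h; simp at this; omega
      rw [Pi.add_apply, Pi.single_eq_of_ne this, add_zero]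
    rw [← modFil_eq_vfam, Fin.addCases_right, act_apply]
    unfold vfam
    dsimp only
    rw [h1, h2, ← mul_smul, wd_mul_wMono, add_smul, add_sub_cancel_left, smul_assoc]
    refine Submodule.smul_mem _ _ (mem_modFil n K M m g _ _ _ ?_ i)
    refine le_trans (Int.ofNat_le.2 (ordTot_sub_left n _ _ k)) ?_
    rw [ordTot, Fin.sum_univ_add]

lemma bernstein_ineq [CharZero K] [Nontrivial M]
    (hgen : Submodule.span (WeylAlg n K) (Set.range g) = ⊤) (k : ℕ) :
    (k + 1) ^ (2 * n) ≤ Module.finrank K (modFil n K M m g ((4 * n * k : ℕ) : ℤ)) ^ 2 := by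
  obtain ⟨i, hi⟩ : ∃ i, g i ≠ 0 := by
    by_contra hcon
    push Not at hcon
    have : Set.range g ⊆ {0} := by rintro _ ⟨i, rfl⟩; exact hcon i
    have h2 := Submodule.span_mono (R := WeylAlg n K) this
    rw [hgen, Submodule.span_zero_singleton] at h2
    exact top_ne_bot (le_bot_iff.1 h2)
  have h := bernstein_card (σ := Fin n ⊕ Fin n) (K := K) (V := M)
    (fun a => act n K M (wMono n K (fun t => a (Sum.inl t)) (fun t => a (Sum.inr t))))
    (Sum.elim (fun l => act n K M (wd n K l)) (fun l => - act n K M (wx n K l)))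
    (by
      rintro (l | l) a x
      · have e1 : (fun t => (a - Finsupp.single (Sum.inl l) 1 : (Fin n ⊕ Fin n) →₀ ℕ) (Sum.inl t)) =
            (fun t => a (Sum.inl t)) - Pi.single l 1 := by
          ext t; simp [Finsupp.single_apply, Pi.single_apply, eq_comm]
        have e2 : (fun t => (a - Finsupp.single (Sum.inl l) 1 : (Fin n ⊕ Fin n) →₀ ℕ) (Sum.inr t)) =
            (fun t => a (Sum.inr t)) := by
          ext t; simp
        rw [e1, e2]
        simp only [Sum.elim_inl, act_apply]
        rw [← mul_smul, ← mul_smul, wd_mul_wMono, wMono_mul_wd, add_smul, add_sub_cancel_left,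
          smul_assoc]
      · have e1 : (fun t => (a - Finsupp.single (Sum.inr l) 1 : (Fin n ⊕ Fin n) →₀ ℕ) (Sum.inr t)) =
            (fun t => a (Sum.inr t)) - Pi.single l 1 := by
          ext t; simp [Finsupp.single_apply, Pi.single_apply, eq_comm]
        have e2 : (fun t => (a - Finsupp.single (Sum.inr l) 1 : (Fin n ⊕ Fin n) →₀ ℕ) (Sum.inl t)) =
            (fun t => a (Sum.inl t)) := by
          ext t; simp
        rw [e1, e2]
        simp only [Sum.elim_inr, LinearMap.neg_apply, map_neg, act_apply]
        rw [← mul_smul, ← mul_smul, wMono_mul_wx, add_smul, smul_assoc]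
        abel)
    (by
      intro x
      have : wMono n K (fun t => (0 : (Fin n ⊕ Fin n) →₀ ℕ) (Sum.inl t))
        (fun t => (0 : (Fin n ⊕ Fin n) →₀ ℕ) (Sum.inr t)) = 1 := wMono_one n K
      rw [act_apply, this, one_smul])
    (fun r => modFil n K M m g (r : ℤ))
    (fun r s hrs => modFil_mono n K M m g (by exact_mod_cast hrs))
    (by
      rintro (l | l) r x hx
      · simp only [Sum.elim_inl, act_apply]
        push_cast
        exact wd_smul_modFil n K M m g l _ _ hx
      · simp only [Sum.elim_inr, LinearMap.neg_apply, act_apply]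
        push_cast
        exact Submodule.neg_mem _ (wx_smul_modFil n K M m g l _ _ hx))
    (g i)
    (by
      have := mem_modFil n K M m g (0 : ℕ) 0 0 (by simp [ordTot]) i
      rwa [wMono_one, one_smul] at this)
    hi
    (by
      intro a r x hx
      have := wMono_smul_modFil n K M m g (fun t => a (Sum.inl t)) (fun t => a (Sum.inr t)) _ _ hx
      rw [Fintype.sum_sum_type]
      exact_mod_cast this)
    (fun r => modFil_finite n K M m g r) k
  have hc : Fintype.card (Fin n ⊕ Fin n) = 2 * n := by simp; omega
  rw [hc] at h
  refine h.trans ?_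
  rw [pow_two]
  refine Nat.mul_le_mul ?_ ?_
  · refine Submodule.finrank_mono (modFil_mono n K M m g ?_)
    have : 2 * n * k ≤ 4 * n * k := Nat.mul_le_mul_right k (by omega)
    exact_mod_cast this
  · refine Submodule.finrank_mono (modFil_mono n K M m g ?_)
    have : 2 * n * k + 2 * n * k ≤ 4 * n * k := by linarith
    exact_mod_cast this

end Filt
theorem statement_18 (n p : ℕ) (hp : 1 ≤ p) (K : Type) [Field K] [CharZero K]
    (nn : Fin p → ℕ) (hn : ∑ j, nn j = n)
    (B : Fin n → Fin p) (hBmono : Monotone B)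
    (hBcard : ∀ j, (Finset.univ.filter fun i => B i = j).card = nn j)
    (M : Type) [AddCommGroup M] [Module K M] [Module (WeylAlg n K) M]
    [IsScalarTower K (WeylAlg n K) M] [Nontrivial M]
    (m : ℕ) (g : Fin m → M)
    (hgen : Submodule.span (WeylAlg n K) (Set.range g) = ⊤)
    (φ : MvPolynomial (Fin p) ℚ) (hφnum : IsNumerical φ)
    (hφ : ∃ s : Fin p → ℤ, ∀ r : Fin p → ℤ, (∀ i, s i ≤ r i) →
      MvPolynomial.eval (fun i => (r i : ℚ)) φ =
        (Module.finrank K (modFilB n p K B M m g r) : ℚ)) :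
    IsHolonomic n K M ↔ φ.totalDegree = n := by
  obtain ⟨s0, hs0⟩ := hφ
  -- a uniform natural bound
  obtain ⟨N, hN⟩ : ∃ N : ℕ, ∀ j, s0 j ≤ (N : ℤ) := by
    refine ⟨∑ j, (s0 j).toNat, fun j => ?_⟩
    refine (Int.self_le_toNat (s0 j)).trans ?_
    exact_mod_cast Finset.single_le_sum (f := fun j => (s0 j).toNat) (fun _ _ => Nat.zero_le _)
      (Finset.mem_univ j)
  have hray : ∀ (a : Fin p → ℕ), (∀ j, 1 ≤ a j) → ∀ t : ℕ, N ≤ t →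
      (ray φ a).eval (t : ℚ) =
        (Module.finrank K (modFilB n p K B M m g (fun j => (a j : ℤ) * t)) : ℚ) := by
    intro a ha t ht
    rw [ray_eval, ← hs0]
    · congr 2
      ext j
      push_cast
      rfl
    · intro j
      refine (hN j).trans ?_
      have : N ≤ a j * t := ht.trans (Nat.le_mul_of_pos_left t (ha j))
      exact_mod_cast this
  constructor
  · rintro ⟨-, hol⟩
    apply le_antisymm
    · obtain ⟨P, s, hP⟩ := bernstein_poly_exists n K M m g
      have hdeg : P.natDegree ≤ n := by
        refine hol m g hgen P ⟨s, fun r hr => ?_⟩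
        obtain ⟨t, rfl⟩ := Int.eq_ofNat_of_zero_le (show 0 ≤ r by omega)
        exact_mod_cast (hP t (by exact_mod_cast hr)).symm
      obtain ⟨a, ha, had⟩ := exists_ray φ
      refine had.trans (le_trans ?_ hdeg)
      have hA : 1 ≤ ∑ j, a j :=
        (ha ⟨0, hp⟩).trans (Finset.single_le_sum (f := a) (fun _ _ => Nat.zero_le _)
          (Finset.mem_univ _))
      have h1 : (ray φ a).natDegree ≤
          (P.comp (Polynomial.C ((∑ j, a j : ℕ) : ℚ) * Polynomial.X)).natDegree := by
        refine natDegree_le_of_eval_le _ _ (max N s) (fun r hr => ?_) (fun r hr => ?_)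
        · rw [hray a ha r ((le_max_left _ _).trans hr)]
          positivity
        · rw [hray a ha r ((le_max_left _ _).trans hr)]
          have h2 := hP ((∑ j, a j) * r) (((le_max_right _ _).trans hr).trans
            (Nat.le_mul_of_pos_left r hA))
          rw [Polynomial.eval_comp, Polynomial.eval_mul, Polynomial.eval_C, Polynomial.eval_X,
            ← Nat.cast_mul, ← h2]
          beta_reduce
          have h3 : modFilB n p K B M m g (fun j => (a j : ℤ) * r) ≤
              modFil n K M m g (((∑ j, a j) * r : ℕ) : ℤ) := by
            have := modFilB_le_modFil n K M m g p B (fun j => (a j : ℤ) * r)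
            rw [← Finset.sum_mul] at this
            exact_mod_cast this
          exact_mod_cast Submodule.finrank_mono h3
      refine h1.trans ?_
      rw [Polynomial.natDegree_comp]
      have h4 : (Polynomial.C ((∑ j, a j : ℕ) : ℚ) * Polynomial.X).natDegree ≤ 1 :=
        (Polynomial.natDegree_C_mul_le _ _).trans Polynomial.natDegree_X_le
      calc _ ≤ P.natDegree * 1 := Nat.mul_le_mul_left _ h4
        _ = _ := mul_one _
    · rcases Nat.eq_zero_or_pos n with h0 | hpos
      · omega
      have h1 : ((Polynomial.X + 1 : Polynomial ℚ) ^ (2 * n)).natDegree ≤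
          ((ray φ (fun _ => 4 * n)) ^ 2).natDegree := by
        refine natDegree_le_of_eval_le _ _ N (fun r hr => ?_) (fun r hr => ?_)
        · simp only [Polynomial.eval_pow, Polynomial.eval_add, Polynomial.eval_X,
            Polynomial.eval_one]
          positivity
        · rw [Polynomial.eval_pow, Polynomial.eval_pow, hray _ (fun _ => by omega) r hr]
          simp only [Polynomial.eval_add, Polynomial.eval_X, Polynomial.eval_one]
          have h2 := bernstein_ineq n K M m g hgen r
          have h3 := Submodule.finrank_mono
            (modFil_le_modFilB n K M m g p B ((4 * n * r : ℕ) : ℤ))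
          have h4 := h2.trans (Nat.pow_le_pow_left h3 2)
          have h5 : (fun _ : Fin p => ((4 * n * r : ℕ) : ℤ)) =
              (fun _ : Fin p => ((4 * n : ℕ) : ℤ) * (r : ℤ)) := by
            ext; push_cast; ring
          rw [h5] at h4
          exact_mod_cast h4
      have h2 : ((Polynomial.X + 1 : Polynomial ℚ) ^ (2 * n)).natDegree = 2 * n := by
        rw [Polynomial.natDegree_pow, ← Polynomial.C_1, Polynomial.natDegree_X_add_C, mul_one]
      rw [h2, Polynomial.natDegree_pow] at h1
      have h3 := ray_natDegree_le φ (fun _ => 4 * n)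
      omega
  · intro hdeg
    classical
    refine ⟨⟨⟨Finset.univ.image g, by simpa using hgen⟩⟩, ?_⟩
    rintro m' g' hgen' ψ ⟨s, hψ⟩
    choose c hc using fun i => exists_mem_modFil n K M m g hgen (g' i)
    set C := ∑ i, c i with hC
    have hcC : ∀ i, g' i ∈ modFil n K M m g (C : ℤ) := fun i =>
      modFil_mono n K M m g (by
        exact_mod_cast Finset.single_le_sum (f := c) (fun _ _ => Nat.zero_le _)
          (Finset.mem_univ i)) (hc i)
    have hle : ∀ r : ℕ, modFil n K M m' g' (r : ℤ) ≤
        modFilB n p K B M m g (fun _ => ((1 : ℕ) : ℤ) * ((r + C : ℕ) : ℤ)) := by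
      intro r
      have h1 : modFil n K M m' g' (r : ℤ) ≤ modFil n K M m g ((r + C : ℕ) : ℤ) := by
        refine modFil_le n K M m' g' fun α β hab i => ?_
        refine modFil_mono n K M m g ?_ (wMono_smul_modFil n K M m g α β _ _ (hcC i))
        push_cast
        linarith
      refine h1.trans ((modFil_le_modFilB n K M m g p B _).trans (le_of_eq ?_))
      congr 1
      ext; simp
    have h1 : ψ.natDegree ≤
        ((ray φ (fun _ => 1)).comp (Polynomial.X + Polynomial.C (C : ℚ))).natDegree := by
      refine natDegree_le_of_eval_le _ _ (max N s.toNat) (fun r hr => ?_) (fun r hr => ?_)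
      · have := hψ r (by have := (le_max_right _ _).trans hr; omega)
        rw [Int.cast_natCast] at this
        rw [this]
        positivity
      · have := hψ r (by have := (le_max_right _ _).trans hr; omega)
        rw [Int.cast_natCast] at this
        rw [this, Polynomial.eval_comp, Polynomial.eval_add, Polynomial.eval_X, Polynomial.eval_C,
          ← Nat.cast_add, hray _ (fun _ => le_rfl) (r + C)
            (((le_max_left _ _).trans hr).trans (Nat.le_add_right _ _))]
        exact_mod_cast Submodule.finrank_mono (hle r)
    rw [Polynomial.natDegree_comp, Polynomial.natDegree_X_add_C, mul_one] at h1
    exact h1.trans ((ray_natDegree_le φ _).trans hdeg.le)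
end

section
/- Let K be a field of characteristic zero, A_n(K) the Weyl algebra with a fixed partition of {1,…,n} into blocks of sizes n_1,…,n_p, M a finitely generated left A_n(K)-module, and let φ_M(t_1,…,t_p) = Σ_{i_1=0}^{n_1} … Σ_{i_p=0}^{n_p} a_{i_1…i_p} C(t_1+i_1,i_1)⋯C(t_p+i_p,i_p) be the multivariate dimension polynomial associated with a finite system of generators f_1,…,f_m of M, written in canonical form with integer coefficients. Let S(φ_M) = {(i_1,…,i_p) : a_{i_1…i_p} ≠ 0} and let S(φ_M)' be the set of elements of S(φ_M) that are maximal with respect to at least one of the p! lexicographic orders ≤_{j_1,…,j_p} on ℕ^p. Then the total degree d = deg φ_M, the coefficient a_{n_1…n_p}, the set S(φ_M)' together with the corresponding coefficients a_{k_1…k_p} for (k_1,…,k_p) ∈ S(φ_M)', and the coefficients of all terms of total degree d, do not depend on the choice of the finite system of generators of M. -/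
set_option synthInstance.maxHeartbeats 400000
set_option maxHeartbeats 1000000

open MvPolynomial

/-- The binomial-coefficient polynomial `C(t_j + c, k)` in the variable `t_j`. -/
noncomputable def binomShift {p : ℕ} (j : Fin p) (c : ℤ) (k : ℕ) : MvPolynomial (Fin p) ℚ :=
  (k.factorial : ℚ)⁻¹ • ∏ l ∈ Finset.range k, (X j + MvPolynomial.C ((c : ℚ) - (l : ℚ)))

/-- The lexicographic order on `ℕ^p` determined by a permutation of the coordinates. -/
def lexLeP {p : ℕ} (π : Equiv.Perm (Fin p)) (u v : Fin p → ℕ) : Prop :=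
  u = v ∨ ∃ j : Fin p, u (π j) < v (π j) ∧ ∀ k, k < j → u (π k) = v (π k)

/-- The elements of `S` that are maximal with respect to at least one of the `p!`
lexicographic orders on `ℕ^p`. -/
def lexMaxSet {p : ℕ} (S : Set (Fin p → ℕ)) : Set (Fin p → ℕ) :=
  {v | v ∈ S ∧ ∃ π : Equiv.Perm (Fin p), ∀ u ∈ S, lexLeP π u v}

lemma aux_list_prod {ι R : Type*} [DecidableEq ι] [Monoid R] (a : ι → R)
    (hc : ∀ i j, Commute (a i) (a j)) (β : ι → ℕ) (i : ι) (l : List ι) (hl : l.Nodup)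
    (hi : i ∈ l) :
    a i * (l.map fun k => a k ^ β k).prod
      = (l.map fun k => a k ^ (β + Pi.single i 1 : ι → ℕ) k).prod := by
  induction l with
  | nil => simp at hi
  | cons b l ih =>
    simp only [List.map_cons, List.prod_cons]
    rw [List.nodup_cons] at hl
    by_cases hb : b = i
    · subst hb
      have : (l.map fun k => a k ^ (β + Pi.single b 1 : ι → ℕ) k) = l.map fun k => a k ^ β k := by
        apply List.map_congr_left
        intro k hk
        have : k ≠ b := fun h => hl.1 (h ▸ hk)
        simp [Pi.single_apply, this]
      rw [this, ← mul_assoc]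
      simp [pow_succ']
    · have hi' : i ∈ l := by
        rcases List.mem_cons.1 hi with h | h
        · exact absurd h.symm hb
        · exact h
      rw [← ih hl.2 hi', ← mul_assoc, ← mul_assoc, ((hc i b).pow_right _).eq]
      simp [Pi.single_apply, hb]

section alg
variable {n p : ℕ} {K : Type} [Field K]

lemma aux_wx_comm (i j : Fin n) : Commute (wx n K i) (wx n K j) := by
  apply Subtype.ext
  apply LinearMap.ext
  intro f
  simp [wx, mul_left_comm]

lemma aux_wd_comm (i j : Fin n) : Commute (wd n K i) (wd n K j) := by
  apply Subtype.ext
  apply LinearMap.ext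
  intro f
  have h : ⁅(pderiv i : Derivation K (MvPolynomial (Fin n) K) (MvPolynomial (Fin n) K)),
      (pderiv j : Derivation K (MvPolynomial (Fin n) K) (MvPolynomial (Fin n) K))⁆ = 0 := by
    apply MvPolynomial.derivation_ext
    intro k
    simp [Derivation.commutator_apply, pderiv_X, Pi.single_apply, apply_ite]
  have h2 := congrArg (fun D => D f) h
  simp only [Derivation.commutator_apply, Derivation.zero_apply, sub_eq_zero] at h2
  simpa [wd] using h2

lemma aux_wd_wx (i j : Fin n) : wd n K i * wx n K j
    = wx n K j * wd n K i + (if i = j then 1 else 0) := by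
  apply Subtype.ext
  apply LinearMap.ext
  intro f
  by_cases h : i = j
  · subst h
    simp [wd, wx, pderiv_X_self]
  · simp [wd, wx, pderiv_X_of_ne (Ne.symm h), h]

lemma aux_wx_mono (i : Fin n) (α β : Fin n → ℕ) :
    wx n K i * wMono n K α β = wMono n K (α + Pi.single i 1) β := by
  unfold wMono
  rw [← mul_assoc, aux_list_prod _ aux_wx_comm α i _ (List.nodup_finRange n) (List.mem_finRange i)]

lemma aux_wd_mono (i : Fin n) (β : Fin n → ℕ) :
    wd n K i * wMono n K 0 β = wMono n K 0 (β + Pi.single i 1) := by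
  have h1 : ((List.finRange n).map fun i => wx n K i ^ (0 : Fin n → ℕ) i).prod = 1 := by simp
  unfold wMono
  rw [h1, one_mul, one_mul,
    aux_list_prod _ aux_wd_comm β i _ (List.nodup_finRange n) (List.mem_finRange i)]

lemma aux_ord_add (B : Fin n → Fin p) (α β α' β' : Fin n → ℕ) (j : Fin p) :
    ordBlk B (α + α') (β + β') j = ordBlk B α β j + ordBlk B α' β' j := by
  unfold ordBlk
  rw [← Finset.sum_add_distrib]
  apply Finset.sum_congr rfl
  intro i _
  simp only [Pi.add_apply]; ring

lemma aux_ord_single (B : Fin n → Fin p) (i : Fin n) :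
    (fun j => (ordBlk B (Pi.single i 1) 0 j : ℤ)) = Pi.single (B i) 1 := by
  funext j
  unfold ordBlk
  simp [Finset.sum_pi_single, Pi.single_apply, eq_comm]

lemma aux_ord_single' (B : Fin n → Fin p) (i : Fin n) :
    (fun j => (ordBlk B 0 (Pi.single i 1) j : ℤ)) = Pi.single (B i) 1 := by
  funext j
  unfold ordBlk
  simp [Finset.sum_pi_single, Pi.single_apply, eq_comm]

lemma aux_mono_mem (B : Fin n → Fin p) (α β : Fin n → ℕ) (r : Fin p → ℤ)
    (h : ∀ j, (ordBlk B α β j : ℤ) ≤ r j) : wMono n K α β ∈ bernWB n p K B r :=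
  Submodule.subset_span ⟨α, β, h, rfl⟩

lemma aux_bern_mono (B : Fin n → Fin p) {r s : Fin p → ℤ} (h : r ≤ s) :
    bernWB n p K B r ≤ bernWB n p K B s := by
  apply Submodule.span_mono
  rintro D ⟨α, β, h1, rfl⟩
  exact ⟨α, β, fun j => (h1 j).trans (h j), rfl⟩

lemma aux_mul_mem_of (B : Fin n → Fin p) (r s : Fin p → ℤ) (D : WeylAlg n K)
    (h : ∀ α β : Fin n → ℕ, (∀ j, (ordBlk B α β j : ℤ) ≤ r j) →
      D * wMono n K α β ∈ bernWB n p K B s) (E : WeylAlg n K) (hE : E ∈ bernWB n p K B r) :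
    D * E ∈ bernWB n p K B s := by
  have : bernWB n p K B r ≤ (bernWB n p K B s).comap (LinearMap.mulLeft K D) := by
    apply Submodule.span_le.2
    rintro _ ⟨α, β, h1, rfl⟩
    exact h α β h1
  exact this hE

lemma aux_wx_mem (B : Fin n → Fin p) (r : Fin p → ℤ) (i : Fin n) (E : WeylAlg n K)
    (hE : E ∈ bernWB n p K B r) : wx n K i * E ∈ bernWB n p K B (r + Pi.single (B i) 1) := by
  refine aux_mul_mem_of B r _ _ ?_ E hE
  intro α β h
  rw [aux_wx_mono]
  apply aux_mono_mem
  intro j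
  have := aux_ord_add B α β (Pi.single i 1) 0 j
  rw [add_zero] at this
  rw [this, ← aux_ord_single]
  push_cast
  simpa using h j

lemma aux_wd_mono_mem (B : Fin n → Fin p) (i : Fin n) (N : ℕ) : ∀ (α β : Fin n → ℕ)
    (r : Fin p → ℤ), ∑ k, α k = N → (∀ j, (ordBlk B α β j : ℤ) ≤ r j) →
    wd n K i * wMono n K α β ∈ bernWB n p K B (r + Pi.single (B i) 1) := by
  induction N with
  | zero =>
    intro α β r hα h
    have : α = 0 := by
      funext k
      have := (Finset.sum_eq_zero_iff.1 hα) k (Finset.mem_univ k)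
      simpa using this
    subst this
    rw [aux_wd_mono]
    apply aux_mono_mem
    intro j
    have := aux_ord_add B 0 β 0 (Pi.single i 1) j
    rw [add_zero] at this
    rw [this, ← aux_ord_single']
    push_cast
    simpa using h j
  | succ N ih =>
    intro α β r hα h
    obtain ⟨k, hk⟩ : ∃ k, α k ≠ 0 := by
      by_contra hcon
      push Not at hcon
      simp [hcon] at hα
    obtain ⟨α', rfl⟩ : ∃ α' : Fin n → ℕ, α = α' + Pi.single k 1 := by
      refine ⟨α - Pi.single k 1, ?_⟩
      funext l
      by_cases hl : l = k
      · subst hl; simp; omega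
      · simp [Pi.single_apply, hl]
    have hs : ∑ l, α' l = N := by
      simp [Finset.sum_add_distrib] at hα
      exact hα
    have h' : ∀ j, (ordBlk B α' β j : ℤ) ≤ (r - Pi.single (B k) 1 : Fin p → ℤ) j := by
      intro j
      have h1 := h j
      have := aux_ord_add B α' β (Pi.single k 1) 0 j
      rw [add_zero] at this
      rw [this] at h1
      rw [← aux_ord_single]
      push_cast at h1
      simp only [Pi.sub_apply]
      linarith
    rw [← aux_wx_mono, ← mul_assoc, aux_wd_wx, add_mul, mul_assoc]
    apply Submodule.add_mem
    · have := aux_wx_mem B _ k _ (ih α' β _ hs h')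
      convert this using 2
      abel
    · split_ifs
      · rw [one_mul]
        apply aux_mono_mem
        intro j
        have h1 := h' j
        simp only [Pi.sub_apply, Pi.add_apply, Pi.single_apply] at h1 ⊢
        split_ifs at h1 ⊢ <;> linarith
      · rw [zero_mul]; exact Submodule.zero_mem _

lemma aux_wd_mem (B : Fin n → Fin p) (r : Fin p → ℤ) (i : Fin n) (E : WeylAlg n K)
    (hE : E ∈ bernWB n p K B r) : wd n K i * E ∈ bernWB n p K B (r + Pi.single (B i) 1) :=
  aux_mul_mem_of B r _ _ (fun α β h => aux_wd_mono_mem B i _ α β r rfl h) E hE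

lemma aux_list_mem (B : Fin n → Fin p) (a : Fin n → WeylAlg n K)
    (ha : ∀ (i : Fin n) (r : Fin p → ℤ) (E : WeylAlg n K), E ∈ bernWB n p K B r → a i * E ∈ bernWB n p K B (r + Pi.single (B i) 1))
    (α : Fin n → ℕ) (l : List (Fin n)) (r : Fin p → ℤ) (E : WeylAlg n K)
    (hE : E ∈ bernWB n p K B r) :
    (l.map fun i => a i ^ α i).prod * E ∈
      bernWB n p K B (r + (l.map fun i => (Pi.single (B i) (α i : ℤ) : Fin p → ℤ)).sum) := by
  have hpow : ∀ (i : Fin n) (k : ℕ) (r : Fin p → ℤ) (E : WeylAlg n K), E ∈ bernWB n p K B r →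
      a i ^ k * E ∈ bernWB n p K B (r + Pi.single (B i) (k : ℤ)) := by
    intro i k
    induction k with
    | zero => intro r E hE; simpa using hE
    | succ k ih =>
      intro r E hE
      have := ha i _ _ (ih r E hE)
      rw [pow_succ', mul_assoc]
      convert this using 2
      rw [add_assoc, ← Pi.single_add]
      push_cast; rfl
  induction l with
  | nil => simpa using hE
  | cons b l ih =>
    have := hpow b (α b) _ _ ih
    simp only [List.map_cons, List.prod_cons, List.sum_cons]
    rw [mul_assoc]
    convert this using 2
    abel

lemma aux_mul_mem (B : Fin n → Fin p) (r s : Fin p → ℤ) (D E : WeylAlg n K)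
    (hD : D ∈ bernWB n p K B r) (hE : E ∈ bernWB n p K B s) :
    D * E ∈ bernWB n p K B (r + s) := by
  have : bernWB n p K B r ≤ (bernWB n p K B (r + s)).comap (LinearMap.mulRight K E) := by
    apply Submodule.span_le.2
    rintro _ ⟨α, β, h1, rfl⟩
    change wMono n K α β * E ∈ bernWB n p K B (r + s)
    unfold wMono
    rw [mul_assoc]
    have h2 := aux_list_mem B (wd n K) (fun i r E hE => aux_wd_mem B r i E hE) β
      (List.finRange n) s E hE
    have h3 := aux_list_mem B (wx n K) (fun i r E hE => aux_wx_mem B r i E hE) α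
      (List.finRange n) _ _ h2
    refine aux_bern_mono B ?_ h3
    intro j
    have h4 := h1 j
    unfold ordBlk at h4
    have key : ∀ γ : Fin n → ℕ, ((List.finRange n).map fun i =>
        (Pi.single (B i) (γ i : ℤ) : Fin p → ℤ)).sum j
        = ∑ i ∈ Finset.univ.filter (fun i => B i = j), (γ i : ℤ) := by
      intro γ
      rw [← List.ofFn_eq_map, List.sum_ofFn, Finset.sum_apply, Finset.sum_filter]
      apply Finset.sum_congr rfl
      intro i _
      simp [Pi.single_apply, eq_comm]
    simp only [Pi.add_apply]
    rw [key, key]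
    push_cast [Finset.sum_add_distrib] at h4
    linarith
  exact this hD

lemma aux_exists_mem (B : Fin n → Fin p) (D : WeylAlg n K) :
    ∃ c : ℕ, D ∈ bernWB n p K B (fun _ => (c : ℤ)) := by
  have h1 : (1 : WeylAlg n K) ∈ bernWB n p K B 0 := by
    have : (1 : WeylAlg n K) = wMono n K 0 0 := by simp [wMono]
    rw [this]
    apply aux_mono_mem
    simp [ordBlk]
  obtain ⟨D, hD⟩ := D
  unfold WeylAlg at hD
  induction hD using Algebra.adjoin_induction with
  | mem x hx =>
    rcases hx with ⟨i, rfl⟩ | ⟨i, rfl⟩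
    · refine ⟨1, ?_⟩
      have := aux_wx_mem B 0 i 1 h1
      rw [mul_one] at this
      refine aux_bern_mono B ?_ this
      intro j
      simp [Pi.single_apply]; split_ifs <;> simp
    · refine ⟨1, ?_⟩
      have := aux_wd_mem B 0 i 1 h1
      rw [mul_one] at this
      refine aux_bern_mono B ?_ this
      intro j
      simp [Pi.single_apply]; split_ifs <;> simp
  | algebraMap k =>
    refine ⟨0, ?_⟩
    have := (bernWB n p K B 0).smul_mem k h1
    rw [← Algebra.algebraMap_eq_smul_one] at this
    exact this
  | add x y hx hy ihx ihy =>
    obtain ⟨c, hc⟩ := ihx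
    obtain ⟨d, hd⟩ := ihy
    refine ⟨c + d, ?_⟩
    have h2 := Submodule.add_mem _
      (aux_bern_mono B (s := fun _ => ((c + d : ℕ) : ℤ)) (by intro j; simp) hc)
      (aux_bern_mono B (s := fun _ => ((c + d : ℕ) : ℤ)) (by intro j; simp) hd)
    exact h2
  | mul x y hx hy ihx ihy =>
    obtain ⟨c, hc⟩ := ihx
    obtain ⟨d, hd⟩ := ihy
    refine ⟨c + d, ?_⟩
    have h2 := aux_mul_mem B _ _ _ _ hc hd
    refine aux_bern_mono B ?_ h2
    intro j; simp

lemma aux_fin (B : Fin n → Fin p) (r : Fin p → ℤ) :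
    Module.Finite K (bernWB n p K B r) := by
  apply Module.Finite.span_of_finite
  have hf : (Set.Iic (fun i => (r (B i)).toNat : Fin n → ℕ)).Finite := Set.finite_Iic _
  refine ((hf.prod hf).image (fun ab => wMono n K ab.1 ab.2)).subset ?_
  rintro _ ⟨α, β, h, rfl⟩
  have : ∀ i, α i + β i ≤ (r (B i)).toNat := by
    intro i
    have h1 := h (B i)
    have h2 : α i + β i ≤ ordBlk B α β (B i) :=
      Finset.single_le_sum (f := fun i => α i + β i) (fun _ _ => Nat.zero_le _) (by simp)
    omega
  refine ⟨(α, β), ⟨?_, ?_⟩, rfl⟩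
  · intro i; have := this i; dsimp only; omega
  · intro i; have := this i; dsimp only; omega

variable (M : Type) [AddCommGroup M] [Module K M] [Module (WeylAlg n K) M]
    [IsScalarTower K (WeylAlg n K) M]

lemma aux_fin_mod (B : Fin n → Fin p) (m : ℕ) (g : Fin m → M) (r : Fin p → ℤ) :
    FiniteDimensional K (modFilB n p K B M m g r) := by
  have := aux_fin (K := K) B r
  let L : Fin m → (WeylAlg n K →ₗ[K] M) := fun i =>
    (LinearMap.toSpanSingleton (WeylAlg n K) M (g i)).restrictScalars K
  have hle : modFilB n p K B M m g r ≤ ⨆ i, (bernWB n p K B r).map (L i) := by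
    apply Submodule.span_le.2
    rintro _ ⟨i, D, hD, rfl⟩
    exact Submodule.mem_iSup_of_mem i ⟨D, hD, rfl⟩
  exact Submodule.finiteDimensional_of_le hle

lemma aux_modFil (B : Fin n → Fin p) (m q : ℕ) (g : Fin m → M) (h : Fin q → M)
    (hh : Submodule.span (WeylAlg n K) (Set.range h) = ⊤) :
    ∃ c : ℕ, ∀ r : Fin p → ℤ, Module.finrank K (modFilB n p K B M m g r)
      ≤ Module.finrank K (modFilB n p K B M q h (fun i => r i + c)) := by
  have h1 : ∀ i, ∃ E : Fin q → WeylAlg n K, ∑ k, E k • h k = g i := by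
    intro i
    have : g i ∈ Submodule.span (WeylAlg n K) (Set.range h) := by rw [hh]; trivial
    exact (Submodule.mem_span_range_iff_exists_fun _).1 this
  choose E hE using h1
  choose c hc using fun i k => aux_exists_mem B (E i k)
  refine ⟨∑ i, ∑ k, c i k, fun r => ?_⟩
  have := aux_fin_mod (K := K) M B q h (fun i => r i + ((∑ i, ∑ k, c i k : ℕ) : ℤ))
  apply Submodule.finrank_mono
  apply Submodule.span_le.2
  rintro _ ⟨i, D, hD, rfl⟩
  rw [← hE i, Finset.smul_sum]
  apply Submodule.sum_mem
  intro k _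
  rw [smul_smul]
  apply Submodule.subset_span
  refine ⟨k, D * E i k, ?_, rfl⟩
  refine aux_bern_mono B ?_ (aux_mul_mem B _ _ _ _ hD (hc i k))
  intro j
  have h2 : c i k ≤ ∑ i, ∑ k, c i k :=
    (Finset.single_le_sum (f := fun k => c i k) (fun _ _ => Nat.zero_le _)
      (Finset.mem_univ k)).trans
    (Finset.single_le_sum (f := fun i => ∑ k, c i k) (fun _ _ => Nat.zero_le _)
      (Finset.mem_univ i))
  simp only [Pi.add_apply]
  have : (c i k : ℤ) ≤ ((∑ i, ∑ k, c i k : ℕ) : ℤ) := by exact_mod_cast h2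
  linarith

end alg

section pol
variable {p : ℕ}
open Filter Topology

lemma aux_weight (w : Fin p → ℕ) (u : Fin p →₀ ℕ) : Finsupp.weight w u = ∑ i, u i * w i := by
  rw [Finsupp.weight_apply, Finsupp.sum_fintype _ _ (by simp)]
  simp

lemma aux_base_tendsto (x c : ℚ) (w : ℕ) (hw : 0 < w) :
    Tendsto (fun T : ℕ => (x * (T : ℚ) ^ w + c) / (T : ℚ) ^ w) atTop (𝓝 x) := by
  have h1 : Tendsto (fun T : ℕ => c / (T : ℚ) ^ w) atTop (𝓝 0) := by
    apply Tendsto.const_div_atTop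
    exact (tendsto_pow_atTop hw.ne').comp tendsto_natCast_atTop_atTop
  have h2 : Tendsto (fun T : ℕ => x + c / (T : ℚ) ^ w) atTop (𝓝 (x + 0)) :=
    tendsto_const_nhds.add h1
  rw [add_zero] at h2
  refine h2.congr' ?_
  filter_upwards [eventually_gt_atTop 0] with T hT
  have : (T : ℚ) ≠ 0 := by positivity
  field_simp

lemma aux_term_tendsto (w : Fin p → ℕ) (hw : ∀ i, 0 < w i) (D : ℕ) (u : Fin p →₀ ℕ)
    (hu : Finsupp.weight w u ≤ D) (x : Fin p → ℚ) (c : ℚ) :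
    Tendsto (fun T : ℕ => (∏ i, (x i * (T : ℚ) ^ w i + c) ^ u i) / (T : ℚ) ^ D) atTop
      (𝓝 (if Finsupp.weight w u = D then ∏ i, x i ^ u i else 0)) := by
  have h1 : Tendsto (fun T : ℕ => ∏ i, ((x i * (T : ℚ) ^ w i + c) / (T : ℚ) ^ w i) ^ u i) atTop
      (𝓝 (∏ i, x i ^ u i)) :=
    tendsto_finsetProd _ fun i _ => (aux_base_tendsto (x i) c (w i) (hw i)).pow _
  have hprod : ∀ T : ℕ, ∏ i, (((T : ℚ) ^ w i) ^ u i) = (T : ℚ) ^ (Finsupp.weight w u) := by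
    intro T
    rw [aux_weight, ← Finset.prod_pow_eq_pow_sum]
    apply Finset.prod_congr rfl
    intro i _
    rw [← pow_mul, mul_comm]
  have h2 : Tendsto (fun T : ℕ => (T : ℚ) ^ (Finsupp.weight w u) / (T : ℚ) ^ D) atTop
      (𝓝 (if Finsupp.weight w u = D then 1 else 0)) := by
    split_ifs with h
    · rw [h]
      refine tendsto_const_nhds.congr' ?_
      filter_upwards [eventually_gt_atTop 0] with T hT
      have : (T : ℚ) ≠ 0 := by positivity
      field_simp
    · obtain ⟨e, rfl⟩ := Nat.exists_eq_add_of_le hu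
      have he : e ≠ 0 := by rintro rfl; simp at h
      have h3 : Tendsto (fun T : ℕ => (1 : ℚ) / (T : ℚ) ^ e) atTop (𝓝 0) := by
        apply Tendsto.const_div_atTop
        exact (tendsto_pow_atTop he).comp tendsto_natCast_atTop_atTop
      refine h3.congr' ?_
      filter_upwards [eventually_gt_atTop 0] with T hT
      have : (T : ℚ) ≠ 0 := by positivity
      rw [pow_add]
      field_simp
  have h3 := h1.mul h2
  rw [mul_ite, mul_one, mul_zero] at h3
  refine h3.congr' ?_
  filter_upwards [eventually_gt_atTop 0] with T hT
  have hT' : (T : ℚ) ≠ 0 := by positivity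
  simp only [div_pow, Finset.prod_div_distrib]
  rw [hprod]
  field_simp

lemma aux_tendsto (φ : MvPolynomial (Fin p) ℚ) (w : Fin p → ℕ) (hw : ∀ i, 0 < w i) (D : ℕ)
    (hD : ∀ u, coeff u φ ≠ 0 → Finsupp.weight w u ≤ D) (x : Fin p → ℚ) (c : ℚ) :
    Tendsto (fun T : ℕ => eval (fun i => x i * (T : ℚ) ^ w i + c) φ / (T : ℚ) ^ D) atTop
      (𝓝 (eval x (weightedHomogeneousComponent w D φ))) := by
  have h1 : eval x (weightedHomogeneousComponent w D φ) = ∑ u ∈ φ.support,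
      coeff u φ * (if Finsupp.weight w u = D then ∏ i, x i ^ u i else 0) := by
    rw [weightedHomogeneousComponent_apply, map_sum, Finset.sum_filter]
    apply Finset.sum_congr rfl
    intro u _
    split_ifs
    · rw [eval_monomial, Finsupp.prod_fintype _ _ (by simp)]
    · simp
  rw [h1]
  have h2 : ∀ T : ℕ, eval (fun i => x i * (T : ℚ) ^ w i + c) φ / (T : ℚ) ^ D =
      ∑ u ∈ φ.support, coeff u φ *
        ((∏ i, (x i * (T : ℚ) ^ w i + c) ^ u i) / (T : ℚ) ^ D) := by
    intro T
    rw [eval_eq', Finset.sum_div]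
    simp only [mul_div_assoc]
  simp only [h2]
  apply tendsto_finsetSum
  intro u hu
  exact (aux_term_tendsto w hw D u (hD u (mem_support_iff.1 hu)) x c).const_mul _

lemma aux_comp_le (φ φ' : MvPolynomial (Fin p) ℚ) (c : ℕ) (s : Fin p → ℤ)
    (hle : ∀ r : Fin p → ℤ, (∀ i, s i ≤ r i) →
      eval (fun i => (r i : ℚ)) φ ≤ eval (fun i => ((r i + c : ℤ) : ℚ)) φ')
    (w : Fin p → ℕ) (hw : ∀ i, 0 < w i) (D : ℕ)
    (hD : ∀ u, coeff u φ ≠ 0 → Finsupp.weight w u ≤ D)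
    (hD' : ∀ u, coeff u φ' ≠ 0 → Finsupp.weight w u ≤ D) (x : Fin p → ℕ) (hx : ∀ i, 0 < x i) :
    eval (fun i => (x i : ℚ)) (weightedHomogeneousComponent w D φ) ≤
      eval (fun i => (x i : ℚ)) (weightedHomogeneousComponent w D φ') := by
  refine le_of_tendsto_of_tendsto (aux_tendsto φ w hw D hD _ 0) (aux_tendsto φ' w hw D hD' _ c) ?_
  have h1 : ∀ i, ∀ᶠ T : ℕ in atTop, s i ≤ (x i : ℤ) * (T : ℤ) ^ w i := by
    intro i
    filter_upwards [eventually_ge_atTop (s i).toNat, eventually_ge_atTop 1] with T hT hT1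
    have h2 : T ≤ T ^ w i := Nat.le_self_pow (hw i).ne' T
    have h3 : T ^ w i ≤ x i * T ^ w i := Nat.le_mul_of_pos_left _ (hx i)
    have h4 : (s i).toNat ≤ x i * T ^ w i := hT.trans (h2.trans h3)
    have h5 : ((s i).toNat : ℤ) ≤ ((x i * T ^ w i : ℕ) : ℤ) := by exact_mod_cast h4
    push_cast at h5
    exact (Int.self_le_toNat _).trans (by simpa using h5)
  filter_upwards [eventually_all.2 h1] with T hT
  have := hle (fun i => (x i : ℤ) * (T : ℤ) ^ w i) hT
  push_cast at this
  simp only [add_zero]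
  exact div_le_div_of_nonneg_right this (by positivity)

lemma aux_coeff_eq (φ φ' : MvPolynomial (Fin p) ℚ) (c c' : ℕ) (s : Fin p → ℤ)
    (hle : ∀ r : Fin p → ℤ, (∀ i, s i ≤ r i) →
      eval (fun i => (r i : ℚ)) φ ≤ eval (fun i => ((r i + c : ℤ) : ℚ)) φ')
    (hle' : ∀ r : Fin p → ℤ, (∀ i, s i ≤ r i) →
      eval (fun i => (r i : ℚ)) φ' ≤ eval (fun i => ((r i + c' : ℤ) : ℚ)) φ)
    (w : Fin p → ℕ) (hw : ∀ i, 0 < w i) (D : ℕ)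
    (hD : ∀ u, coeff u φ ≠ 0 → Finsupp.weight w u ≤ D)
    (hD' : ∀ u, coeff u φ' ≠ 0 → Finsupp.weight w u ≤ D) (v : Fin p →₀ ℕ)
    (hv : Finsupp.weight w v = D) : coeff v φ = coeff v φ' := by
  have h : weightedHomogeneousComponent w D φ = weightedHomogeneousComponent w D φ' := by
    refine MvPolynomial.funext_set (fun _ => Set.range fun k : ℕ => ((k + 1 : ℕ) : ℚ)) ?_ ?_
    · intro _
      apply Set.infinite_range_of_injective
      intro a b hab
      simpa using hab
    · intro x hx
      choose y hy using fun i => hx i trivial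
      obtain rfl : (fun i => ((y i + 1 : ℕ) : ℚ)) = x := funext hy
      exact le_antisymm
        (aux_comp_le φ φ' c s hle w hw D hD hD' (fun i => y i + 1) (fun i => Nat.succ_pos _))
        (aux_comp_le φ' φ c' s hle' w hw D hD' hD (fun i => y i + 1) (fun i => Nat.succ_pos _))
  have h2 := congrArg (coeff v) h
  simpa [coeff_weightedHomogeneousComponent, hv] using h2

/-- coefficients of one-variable binomials -/
lemma aux_binom (q : ℕ) (c : ℤ) (k : ℕ) : ∃ P : Polynomial ℚ, P.natDegree ≤ k ∧
    P.coeff k = (k.factorial : ℚ)⁻¹ ∧ ∀ {p : ℕ} (j : Fin p),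
      binomShift j c k = Polynomial.aeval (X j : MvPolynomial (Fin p) ℚ) P := by
  let Q : Polynomial ℚ := ∏ l ∈ Finset.range k, (Polynomial.X + Polynomial.C ((c : ℚ) - (l : ℚ)))
  have hm : Q.Monic := Polynomial.monic_prod_of_monic _ _ fun l _ => Polynomial.monic_X_add_C _
  have hd : Q.natDegree = k := by
    rw [Polynomial.natDegree_prod_of_monic _ _ fun l _ => Polynomial.monic_X_add_C _]
    simp only [Polynomial.natDegree_X_add_C]
    simp
  refine ⟨(k.factorial : ℚ)⁻¹ • Q, ?_, ?_, ?_⟩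
  · exact (Polynomial.natDegree_smul_le _ _).trans hd.le
  · have h1 := hm.coeff_natDegree
    rw [hd] at h1
    simp [h1]
  · intro p j
    unfold binomShift
    simp [Q, map_prod, algebraMap_eq]

lemma aux_prod_aeval (P : Fin p → Polynomial ℚ) (u : Fin p →₀ ℕ) :
    coeff u (∏ i, Polynomial.aeval (X i : MvPolynomial (Fin p) ℚ) (P i))
      = ∏ i, (P i).coeff (u i) := by
  have h1 : ∀ i, Polynomial.aeval (X i : MvPolynomial (Fin p) ℚ) (P i)
      = ∑ k ∈ (P i).support, C ((P i).coeff k) * X i ^ k := by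
    intro i
    rw [Polynomial.aeval_eq_sum_range' (n := (P i).natDegree + 1) (by simp)]
    symm
    rw [Finset.sum_subset (s₂ := Finset.range ((P i).natDegree + 1))]
    · simp [smul_eq_C_mul]
    · intro k hk
      rw [Finset.mem_range]
      exact Nat.lt_succ_of_le (Polynomial.le_natDegree_of_mem_supp _ hk)
    · intro k _ hk
      rw [Polynomial.notMem_support_iff] at hk
      simp [hk]
  simp only [h1]
  rw [Finset.prod_univ_sum, coeff_sum]
  have h2 : ∀ f : Fin p → ℕ, (∏ i, C ((P i).coeff (f i)) * X i ^ f i : MvPolynomial (Fin p) ℚ)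
      = monomial (Finsupp.equivFunOnFinite.symm f) (∏ i, (P i).coeff (f i)) := by
    intro f
    rw [Finset.prod_mul_distrib, monomial_eq, Finsupp.prod_fintype _ _ (by simp), map_prod]
    rfl
  simp only [h2, coeff_monomial]
  rw [Finset.sum_eq_single (⇑u)]
  · simp
  · intro f _ hf
    rw [if_neg]
    intro h
    exact hf (by rw [← h]; rfl)
  · intro hu
    rw [if_pos (by simp)]
    simp only [Fintype.mem_piFinset, not_forall, Polynomial.notMem_support_iff] at hu
    obtain ⟨i, hi⟩ := hu
    exact Finset.prod_eq_zero (Finset.mem_univ i) hi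

lemma aux_binom_prod (v : Fin p → ℕ) (u : Fin p →₀ ℕ) :
    (¬ (⇑u ≤ v) → coeff u (∏ i, binomShift i (v i : ℤ) (v i)) = 0) ∧
    (⇑u = v → coeff u (∏ i, binomShift i (v i : ℤ) (v i)) = ∏ i, ((v i).factorial : ℚ)⁻¹) := by
  choose P hP1 hP2 hP3 using fun i => aux_binom 0 (v i : ℤ) (v i)
  have : (∏ i, binomShift i (v i : ℤ) (v i) : MvPolynomial (Fin p) ℚ)
      = ∏ i, Polynomial.aeval (X i : MvPolynomial (Fin p) ℚ) (P i) :=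
    Finset.prod_congr rfl fun i _ => hP3 i i
  rw [this, aux_prod_aeval]
  constructor
  · intro h
    rw [Pi.le_def, not_forall] at h
    obtain ⟨i, hi⟩ := h
    apply Finset.prod_eq_zero (Finset.mem_univ i)
    apply Polynomial.coeff_eq_zero_of_natDegree_lt
    have := hP1 i
    omega
  · rintro rfl
    exact Finset.prod_congr rfl fun i _ => hP2 i

lemma aux_canon (nn : Fin p → ℕ) (aC : (Fin p → ℕ) → ℤ) (φ : MvPolynomial (Fin p) ℚ)
    (haC0 : ∀ v : Fin p → ℕ, (∃ i, nn i < v i) → aC v = 0)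
    (haC : φ = ∑ v ∈ Fintype.piFinset (fun i => Finset.range (nn i + 1)),
      (aC v : ℚ) • ∏ i, binomShift i (v i : ℤ) (v i)) :
    (∀ u, coeff u φ ≠ 0 → ∃ v, aC v ≠ 0 ∧ ⇑u ≤ v) ∧
    ∀ v : Fin p → ℕ, (∀ v', aC v' ≠ 0 → v ≤ v' → v' = v) →
      coeff (Finsupp.equivFunOnFinite.symm v) φ = aC v * ∏ i, ((v i).factorial : ℚ)⁻¹ := by
  subst haC
  constructor
  · intro u hu
    rw [coeff_sum] at hu
    obtain ⟨v, _, hv⟩ := Finset.exists_ne_zero_of_sum_ne_zero hu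
    rw [coeff_smul, smul_eq_mul] at hv
    refine ⟨v, ?_, ?_⟩
    · intro h
      simp [h] at hv
    · by_contra h
      rw [(aux_binom_prod v u).1 h] at hv
      simp at hv
  · intro v hv
    rw [coeff_sum, Finset.sum_eq_single v]
    · rw [coeff_smul, smul_eq_mul, (aux_binom_prod v _).2 rfl]
    · intro v' _ hne
      rw [coeff_smul, smul_eq_mul]
      by_cases h0 : aC v' = 0
      · simp [h0]
      · rw [(aux_binom_prod v' _).1, mul_zero]
        intro h
        exact hne (hv v' h0 h)
    · intro hnot
      have : aC v = 0 := by
        apply haC0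
        simp only [Fintype.mem_piFinset, Finset.mem_range, not_forall] at hnot
        obtain ⟨i, hi⟩ := hnot
        exact ⟨i, by omega⟩
      simp [this]

lemma aux_lex_weight (π : Equiv.Perm (Fin p)) (N : ℕ) :
    ∃ w : Fin p → ℕ, (∀ i, 0 < w i) ∧ ∀ u v : Fin p → ℕ, (∀ i, u i ≤ N) → (∀ i, v i ≤ N) →
      ∑ i, u i * w i ≤ ∑ i, v i * w i → lexLeP π u v := by
  let b := p * N + 1
  refine ⟨fun i => b ^ (p - (π.symm i : ℕ)), fun i => by positivity, ?_⟩
  intro u v hu hv hle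
  by_contra hcon
  unfold lexLeP at hcon
  push Not at hcon
  obtain ⟨hne, hlex⟩ := hcon
  have hex : ∃ j : Fin p, u (π j) ≠ v (π j) := by
    by_contra h
    push Not at h
    apply hne
    funext i
    simpa using h (π.symm i)
  obtain ⟨j, hj, hmin⟩ := WellFounded.has_min (wellFounded_lt (α := Fin p))
    {j | u (π j) ≠ v (π j)} hex
  have hmin' : ∀ k, k < j → u (π k) = v (π k) := by
    intro k hk
    by_contra h
    exact hmin k h hk
  have hgt : v (π j) < u (π j) := by
    rcases lt_trichotomy (u (π j)) (v (π j)) with h | h | h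
    · obtain ⟨k, hk, hk'⟩ := hlex j h
      exact absurd (hmin' k hk) hk'
    · exact absurd h hj
    · exact h
  have e : ∀ f : Fin p → ℕ, ∑ i, f i * b ^ (p - (π.symm i : ℕ))
      = ∑ k, f (π k) * b ^ (p - (k : ℕ)) := by
    intro f
    rw [← Equiv.sum_comp π]
    simp
  rw [e, e] at hle
  -- compare term by term
  have hterm : ∀ k : Fin p, v (π k) * b ^ (p - (k : ℕ)) + (if k = j then b ^ (p - (j : ℕ)) else 0)
      ≤ u (π k) * b ^ (p - (k : ℕ)) + N * b ^ (p - (j : ℕ) - 1) := by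
    intro k
    rcases lt_trichotomy k j with h | h | h
    · rw [hmin' k h, if_neg h.ne]; omega
    · subst h
      rw [if_pos rfl]
      have : (v (π k) + 1) * b ^ (p - (k : ℕ)) ≤ u (π k) * b ^ (p - (k : ℕ)) :=
        Nat.mul_le_mul_right _ hgt
      rw [add_mul, one_mul] at this
      omega
    · rw [if_neg h.ne', add_zero]
      have h1 : b ^ (p - (k : ℕ)) ≤ b ^ (p - (j : ℕ) - 1) := by
        apply Nat.pow_le_pow_right (by positivity)
        have : (j : ℕ) < k := h
        omega
      have := Nat.mul_le_mul (hv (π k)) h1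
      omega
  have hsum := Finset.sum_le_sum fun k (_ : k ∈ Finset.univ) => hterm k
  rw [Finset.sum_add_distrib, Finset.sum_add_distrib] at hsum
  simp only [Finset.sum_ite_eq', Finset.mem_univ, if_true, Finset.sum_const, Finset.card_univ,
    Fintype.card_fin, smul_eq_mul] at hsum
  have hb : b ^ (p - (j : ℕ)) = b ^ (p - (j : ℕ) - 1) * (p * N + 1) := by
    have : p - (j : ℕ) = (p - (j : ℕ) - 1) + 1 := by have := j.2; omega
    conv_lhs => rw [this, pow_succ]
  have hpos : 0 < b ^ (p - (j : ℕ) - 1) := by positivity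
  rw [hb] at hsum
  nlinarith

lemma aux_lex_antisymm (π : Equiv.Perm (Fin p)) (u v : Fin p → ℕ) (h1 : lexLeP π u v)
    (h2 : lexLeP π v u) : u = v := by
  rcases h1 with h1 | ⟨j, hj, hj'⟩
  · exact h1
  rcases h2 with h2 | ⟨k, hk, hk'⟩
  · exact h2.symm
  exfalso
  rcases lt_trichotomy j k with h | h | h
  · have := hk' j h; omega
  · subst h; omega
  · have := hj' k h; omega

end pol

section fin
variable {p : ℕ}

lemma aux_deg (φ : MvPolynomial (Fin p) ℚ) (u : Fin p →₀ ℕ) (hu : coeff u φ ≠ 0) :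
    Finsupp.weight (fun _ : Fin p => 1) u ≤ φ.totalDegree := by
  have := le_totalDegree (mem_support_iff.2 hu)
  rw [Finsupp.sum_fintype _ _ (by simp)] at this
  rw [aux_weight]
  simpa using this

lemma aux_totalDegree_le (φ φ' : MvPolynomial (Fin p) ℚ) (c c' : ℕ) (s : Fin p → ℤ)
    (hle : ∀ r : Fin p → ℤ, (∀ i, s i ≤ r i) →
      eval (fun i => (r i : ℚ)) φ ≤ eval (fun i => ((r i + c : ℤ) : ℚ)) φ')
    (hle' : ∀ r : Fin p → ℤ, (∀ i, s i ≤ r i) →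
      eval (fun i => (r i : ℚ)) φ' ≤ eval (fun i => ((r i + c' : ℤ) : ℚ)) φ) :
    φ.totalDegree ≤ φ'.totalDegree := by
  by_contra hcon
  push Not at hcon
  have h0 : φ.support.Nonempty := by
    rw [Finset.nonempty_iff_ne_empty]
    intro h
    rw [support_eq_empty] at h
    simp [h] at hcon
  obtain ⟨u, hu, hmax⟩ := Finset.exists_mem_eq_sup φ.support h0
    (fun s => s.sum fun _ e => e)
  have hu' : Finsupp.weight (fun _ : Fin p => 1) u = φ.totalDegree := by
    unfold totalDegree
    rw [hmax, aux_weight, Finsupp.sum_fintype _ _ (by simp)]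
    simp
  have := aux_coeff_eq φ φ' c c' s hle hle' (fun _ => 1) (fun _ => Nat.one_pos) φ.totalDegree
      (fun u hu => aux_deg φ u hu) (fun u hu => (aux_deg φ' u hu).trans hcon.le) u hu'
  have h1 : coeff u φ' ≠ 0 := by rw [← this]; exact mem_support_iff.1 hu
  have := aux_deg φ' u h1
  omega

lemma aux_lex (φ φ' : MvPolynomial (Fin p) ℚ) (c c' : ℕ) (s : Fin p → ℤ)
    (hle : ∀ r : Fin p → ℤ, (∀ i, s i ≤ r i) →
      eval (fun i => (r i : ℚ)) φ ≤ eval (fun i => ((r i + c : ℤ) : ℚ)) φ')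
    (hle' : ∀ r : Fin p → ℤ, (∀ i, s i ≤ r i) →
      eval (fun i => (r i : ℚ)) φ' ≤ eval (fun i => ((r i + c' : ℤ) : ℚ)) φ)
    (nn : Fin p → ℕ) (aC bC : (Fin p → ℕ) → ℤ)
    (haC0 : ∀ v : Fin p → ℕ, (∃ i, nn i < v i) → aC v = 0)
    (hbC0 : ∀ v : Fin p → ℕ, (∃ i, nn i < v i) → bC v = 0)
    (haC : φ = ∑ v ∈ Fintype.piFinset (fun i => Finset.range (nn i + 1)),
      (aC v : ℚ) • ∏ i, binomShift i (v i : ℤ) (v i))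
    (hbC : φ' = ∑ v ∈ Fintype.piFinset (fun i => Finset.range (nn i + 1)),
      (bC v : ℚ) • ∏ i, binomShift i (v i : ℤ) (v i)) (π : Equiv.Perm (Fin p))
    (v₀ : Fin p → ℕ) (hv₀ : aC v₀ ≠ 0) (hmax₀ : ∀ u, aC u ≠ 0 → lexLeP π u v₀) :
    aC v₀ = bC v₀ ∧ ∀ u, bC u ≠ 0 → lexLeP π u v₀ := by
  obtain ⟨ha1, ha2⟩ := aux_canon nn aC φ haC0 haC
  obtain ⟨hb1, hb2⟩ := aux_canon nn bC φ' hbC0 hbC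
  obtain ⟨w, hw, hw'⟩ := aux_lex_weight π (∑ i, nn i)
  have hbox : ∀ v : Fin p → ℕ, (aC v ≠ 0 ∨ bC v ≠ 0) → v ≤ nn := by
    intro v hv i
    by_contra h
    rcases hv with h1 | h1
    · exact h1 (haC0 v ⟨i, not_le.1 h⟩)
    · exact h1 (hbC0 v ⟨i, not_le.1 h⟩)
  have hN : ∀ v : Fin p → ℕ, (aC v ≠ 0 ∨ bC v ≠ 0) → ∀ i, v i ≤ ∑ i, nn i := fun v hv i =>
    (hbox v hv i).trans (Finset.single_le_sum (fun _ _ => Nat.zero_le _) (Finset.mem_univ i))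
  have hfin : {v : Fin p → ℕ | aC v ≠ 0 ∨ bC v ≠ 0}.Finite :=
    (Set.finite_Iic nn).subset fun v hv => hbox v hv
  obtain ⟨v, hv, hvmax⟩ := Set.exists_max_image _ (fun v : Fin p → ℕ => ∑ i, v i * w i) hfin
    ⟨v₀, Or.inl hv₀⟩
  have hlt : ∀ v', v ≤ v' → (aC v' ≠ 0 ∨ bC v' ≠ 0) → v' = v := by
    intro v' hle1 hv'
    by_contra hne
    have h1 := hvmax v' hv'
    obtain ⟨i, hi⟩ : ∃ i, v i < v' i := by
      by_contra h
      push Not at h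
      exact hne (le_antisymm h hle1)
    have h2 : ∑ i, v i * w i < ∑ i, v' i * w i :=
      Finset.sum_lt_sum (fun i _ => Nat.mul_le_mul_right _ (hle1 i))
        ⟨i, Finset.mem_univ i, Nat.mul_lt_mul_of_pos_right hi (hw i)⟩
    exact absurd h1 (not_le.2 h2)
  have hcoef : coeff (Finsupp.equivFunOnFinite.symm v) φ
      = coeff (Finsupp.equivFunOnFinite.symm v) φ' := by
    refine aux_coeff_eq φ φ' c c' s hle hle' w hw (∑ i, v i * w i) ?_ ?_ _ ?_
    · intro u hu
      obtain ⟨v', h1, h2⟩ := ha1 u hu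
      rw [aux_weight]
      exact (Finset.sum_le_sum fun i _ => Nat.mul_le_mul_right _ (h2 i)).trans
        (hvmax v' (Or.inl h1))
    · intro u hu
      obtain ⟨v', h1, h2⟩ := hb1 u hu
      rw [aux_weight]
      exact (Finset.sum_le_sum fun i _ => Nat.mul_le_mul_right _ (h2 i)).trans
        (hvmax v' (Or.inr h1))
    · rw [aux_weight]; rfl
  rw [ha2 v fun v' h1 h2 => hlt v' h2 (Or.inl h1), hb2 v fun v' h1 h2 => hlt v' h2 (Or.inr h1)]
    at hcoef
  have hpos : (∏ i, ((v i).factorial : ℚ)⁻¹) ≠ 0 :=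
    Finset.prod_ne_zero_iff.2 fun i _ => inv_ne_zero (by exact_mod_cast (v i).factorial_ne_zero)
  have hab : aC v = bC v := by exact_mod_cast mul_right_cancel₀ hpos hcoef
  have hav : aC v ≠ 0 := by
    rcases hv with h | h
    · exact h
    · rw [hab]; exact h
  have hmax : ∀ u, (aC u ≠ 0 ∨ bC u ≠ 0) → lexLeP π u v := fun u hu =>
    hw' u v (hN u hu) (hN v (Or.inl hav)) (hvmax u hu)
  have heq : v₀ = v := aux_lex_antisymm π v₀ v (hmax v₀ (Or.inl hv₀)) (hmax₀ v hav)
  subst heq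
  exact ⟨hab, fun u hu => hmax u (Or.inr hu)⟩

end fin

theorem statement_19 (n p : ℕ) (hp : 1 ≤ p) (K : Type) [Field K] [CharZero K]
    (nn : Fin p → ℕ) (hn : ∑ j, nn j = n)
    (B : Fin n → Fin p) (hBmono : Monotone B)
    (hBcard : ∀ j, (Finset.univ.filter fun i => B i = j).card = nn j)
    (M : Type) [AddCommGroup M] [Module K M] [Module (WeylAlg n K) M]
    [IsScalarTower K (WeylAlg n K) M]
    (m q : ℕ) (g : Fin m → M) (h : Fin q → M)
    (hg : Submodule.span (WeylAlg n K) (Set.range g) = ⊤)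
    (hh : Submodule.span (WeylAlg n K) (Set.range h) = ⊤)
    (φ φ' : MvPolynomial (Fin p) ℚ)
    (hφnum : IsNumerical φ) (hφ'num : IsNumerical φ')
    (hφ : ∃ s : Fin p → ℤ, ∀ r : Fin p → ℤ, (∀ i, s i ≤ r i) →
      MvPolynomial.eval (fun i => (r i : ℚ)) φ =
        (Module.finrank K (modFilB n p K B M m g r) : ℚ))
    (hφ' : ∃ s : Fin p → ℤ, ∀ r : Fin p → ℤ, (∀ i, s i ≤ r i) →
      MvPolynomial.eval (fun i => (r i : ℚ)) φ' =
        (Module.finrank K (modFilB n p K B M q h r) : ℚ))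
    (aC bC : (Fin p → ℕ) → ℤ)
    (haC0 : ∀ v : Fin p → ℕ, (∃ i, nn i < v i) → aC v = 0)
    (hbC0 : ∀ v : Fin p → ℕ, (∃ i, nn i < v i) → bC v = 0)
    (haC : φ = ∑ v ∈ Fintype.piFinset (fun i => Finset.range (nn i + 1)),
      (aC v : ℚ) • ∏ i, binomShift i (v i : ℤ) (v i))
    (hbC : φ' = ∑ v ∈ Fintype.piFinset (fun i => Finset.range (nn i + 1)),
      (bC v : ℚ) • ∏ i, binomShift i (v i : ℤ) (v i)) :
    φ.totalDegree = φ'.totalDegree ∧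
    aC nn = bC nn ∧
    lexMaxSet {v | aC v ≠ 0} = lexMaxSet {v | bC v ≠ 0} ∧
    (∀ v ∈ lexMaxSet {v | aC v ≠ 0}, aC v = bC v) ∧
    ∀ k : Fin p → ℕ, (∑ i, k i) = φ.totalDegree →
      MvPolynomial.coeff (Finsupp.equivFunOnFinite.symm k) φ =
        MvPolynomial.coeff (Finsupp.equivFunOnFinite.symm k) φ' := by
  obtain ⟨s, hs⟩ := hφ
  obtain ⟨s', hs'⟩ := hφ'
  obtain ⟨c, hc⟩ := aux_modFil (K := K) M B m q g h hh
  obtain ⟨c', hc'⟩ := aux_modFil (K := K) M B q m h g hg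
  have hle : ∀ r : Fin p → ℤ, (∀ i, max (s i) (s' i) ≤ r i) →
      eval (fun i => (r i : ℚ)) φ ≤ eval (fun i => ((r i + c : ℤ) : ℚ)) φ' := by
    intro r hr
    rw [hs r fun i => (le_max_left _ _).trans (hr i), hs' (fun i => r i + c) fun i => by
      have := (le_max_right _ _).trans (hr i); omega]
    exact_mod_cast hc r
  have hle' : ∀ r : Fin p → ℤ, (∀ i, max (s i) (s' i) ≤ r i) →
      eval (fun i => (r i : ℚ)) φ' ≤ eval (fun i => ((r i + c' : ℤ) : ℚ)) φ := by
    intro r hr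
    rw [hs' r fun i => (le_max_right _ _).trans (hr i), hs (fun i => r i + c') fun i => by
      have := (le_max_left _ _).trans (hr i); omega]
    exact_mod_cast hc' r
  have hdeg := le_antisymm (aux_totalDegree_le φ φ' c c' _ hle hle')
    (aux_totalDegree_le φ' φ c' c _ hle' hle)
  have hlex := fun π => aux_lex φ φ' c c' _ hle hle' nn aC bC haC0 hbC0 haC hbC π
  have hlex' := fun π => aux_lex φ' φ c' c _ hle' hle nn bC aC hbC0 haC0 hbC haC π
  have hnnmax : ∀ (aC : (Fin p → ℕ) → ℤ),
      (∀ v : Fin p → ℕ, (∃ i, nn i < v i) → aC v = 0) → ∀ u, aC u ≠ 0 → lexLeP 1 u nn := by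
    intro aC haC0 u hu
    have hun : u ≤ nn := by
      intro i
      by_contra h
      exact hu (haC0 u ⟨i, not_le.1 h⟩)
    obtain ⟨w, hw, hw'⟩ := aux_lex_weight (1 : Equiv.Perm (Fin p)) (∑ i, nn i)
    have hN : ∀ i, nn i ≤ ∑ i, nn i := fun i =>
      Finset.single_le_sum (fun _ _ => Nat.zero_le _) (Finset.mem_univ i)
    exact hw' u nn (fun i => (hun i).trans (hN i)) hN
      (Finset.sum_le_sum fun i _ => Nat.mul_le_mul_right _ (hun i))
  refine ⟨hdeg, ?_, ?_, ?_, ?_⟩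
  · by_cases ha : aC nn = 0
    · by_cases hb : bC nn = 0
      · rw [ha, hb]
      · exact (hlex' 1 nn hb (hnnmax bC hbC0)).1.symm
    · exact (hlex 1 nn ha (hnnmax aC haC0)).1
  · ext v
    constructor
    · rintro ⟨hv, π, hπ⟩
      obtain ⟨h1, h2⟩ := hlex π v hv hπ
      exact ⟨by rw [Set.mem_setOf_eq, ← h1]; exact hv, π, h2⟩
    · rintro ⟨hv, π, hπ⟩
      obtain ⟨h1, h2⟩ := hlex' π v hv hπ
      exact ⟨by rw [Set.mem_setOf_eq, ← h1]; exact hv, π, h2⟩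
  · rintro v ⟨hv, π, hπ⟩
    exact (hlex π v hv hπ).1
  · intro k hk
    refine aux_coeff_eq φ φ' c c' _ hle hle' (fun _ => 1) (fun _ => Nat.one_pos) φ.totalDegree
      (fun u hu => aux_deg φ u hu) (fun u hu => ?_) _ ?_
    · rw [hdeg]; exact aux_deg φ' u hu
    · rw [aux_weight, ← hk]; simp
end
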